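/- Let V ⊂ Ĉ be open and nonempty (Ĉ the Riemann sphere), let f:V→Ĉ be holomorphic and nonconstant, and assume f does not extend to a conformal automorphism of Ĉ. Set U := Ĉ∖P(f), and assume that P(f) contains at least three points, so that U is hyperbolic. Let w ∈ F(f) be such that fⁿ(w) is defined and lies in U for all n ≥ 0. Then d_U(fⁿ(w), U ∩ J(f)) → ∞ as n → ∞, with the convention that this distance is ∞ when U ∩ J(f) = ∅. -/

import Mathlib

open Set Metric Filter Topology OnePoint

open scoped ENNReal

/-- The finite part of a point of the Riemann sphere `Ĉ = OnePoint ℂ` (junk value `0` at `∞`). -/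
noncomputable def finPart (u : OnePoint ℂ) : ℂ := Option.getD u 0

/-- The inversion `u ↦ 1/u` of the Riemann sphere, exchanging `0` and `∞`. -/
noncomputable def sphereInv : OnePoint ℂ → OnePoint ℂ := fun u =>
  Option.casesOn u ((0 : ℂ) : OnePoint ℂ)
    (fun z => if z = 0 then (∞ : OnePoint ℂ) else ((z⁻¹ : ℂ) : OnePoint ℂ))

/-- The coordinate chart of `Ĉ` adapted to the point `v`: the identity chart if `v` is finite,
and the chart `u ↦ 1/u` at `∞`. -/
noncomputable def sphereChart (v : OnePoint ℂ) : OnePoint ℂ → ℂ :=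
  Option.casesOn v (fun u => finPart (sphereInv u)) (fun _ => fun u => finPart u)

/-- The local parametrization of `Ĉ` near the point `u`: `x ↦ x` near a finite point and
`x ↦ 1/x` near `∞`. -/
noncomputable def sphereParam (u : OnePoint ℂ) : ℂ → OnePoint ℂ :=
  Option.casesOn u (fun x => sphereInv ((x : OnePoint ℂ))) (fun _ => fun x => (x : OnePoint ℂ))

/-- The chart coordinate of the point `u` of `Ĉ` (`0` for `u = ∞`). -/
noncomputable def sphereCoord (u : OnePoint ℂ) : ℂ :=
  Option.casesOn u (0 : ℂ) (fun z => z)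

/-- The chordal (spherical) metric on the Riemann sphere `Ĉ = OnePoint ℂ`. -/
noncomputable def chordalDist (u v : OnePoint ℂ) : ℝ :=
  Option.casesOn u
    (Option.casesOn v (0 : ℝ) fun w => 2 / Real.sqrt (1 + ‖w‖ ^ 2))
    (fun z => Option.casesOn v (2 / Real.sqrt (1 + ‖z‖ ^ 2))
      (fun w => 2 * dist z w / (Real.sqrt (1 + ‖z‖ ^ 2) * Real.sqrt (1 + ‖w‖ ^ 2))))

/-- A map `F : Ĉ → Ĉ` is holomorphic (meromorphic) at `u`: it is continuous at `u` and its
representative in the standard charts is analytic at the coordinate of `u`. -/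
def SphereAnalyticAt (F : OnePoint ℂ → OnePoint ℂ) (u : OnePoint ℂ) : Prop :=
  ContinuousAt F u ∧
    AnalyticAt ℂ (fun x : ℂ => sphereChart (F u) (F (sphereParam u x))) (sphereCoord u)

/-- A map `F : ℂ → Ĉ` is meromorphic at a point `z ∈ ℂ`: it is continuous at `z` and its
representative in the chart adapted to `F z` is analytic at `z`. -/
def SphereMeroAt (F : ℂ → OnePoint ℂ) (z : ℂ) : Prop :=
  ContinuousAt F z ∧ AnalyticAt ℂ (fun x : ℂ => sphereChart (F z) (F x)) z

/-- The family of iterates of `F` is equicontinuous on `N ⊆ Ĉ` w.r.t. the chordal metric. -/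
def SphereEquicontOn (F : OnePoint ℂ → OnePoint ℂ) (N : Set (OnePoint ℂ)) : Prop :=
  ∀ u ∈ N, ∀ ε > (0 : ℝ), ∃ δ > (0 : ℝ), ∀ v ∈ N, chordalDist u v < δ →
    ∀ n : ℕ, chordalDist (F^[n] u) (F^[n] v) < ε

/-- The Fatou set of a map `F` holomorphic on `V ⊆ Ĉ`: points having an open neighborhood `N`
such that either all iterates are defined on `N` (i.e. the orbit of `N` stays in `V`) and form
a normal (equicontinuous) family, or some iterated image of `N` avoids the closure of `V`. -/
def SphereFatou (F : OnePoint ℂ → OnePoint ℂ) (V : Set (OnePoint ℂ)) : Set (OnePoint ℂ) :=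
  {u : OnePoint ℂ | ∃ N : Set (OnePoint ℂ), IsOpen N ∧ u ∈ N ∧
    (((∀ n : ℕ, F^[n] '' N ⊆ V) ∧ SphereEquicontOn F N) ∨
      (∃ n : ℕ, (∀ k < n, F^[k] '' N ⊆ V) ∧ F^[n] '' N ⊆ (closure V)ᶜ))}

/-- `S` is the set of singular values of `F : V → Ĉ`: the smallest compact set `S` such that
`F : V ∩ F⁻¹(Ĉ∖S) → Ĉ∖S` is a covering map. -/
def SphereSingularSet (F : OnePoint ℂ → OnePoint ℂ) (V S : Set (OnePoint ℂ)) : Prop :=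
  IsCompact S ∧
    (∃ h : MapsTo F (V ∩ F ⁻¹' Sᶜ) Sᶜ,
      IsCoveringMap (MapsTo.restrict F (V ∩ F ⁻¹' Sᶜ) Sᶜ h)) ∧
    ∀ T : Set (OnePoint ℂ), IsCompact T →
      (∃ h : MapsTo F (V ∩ F ⁻¹' Tᶜ) Tᶜ,
        IsCoveringMap (MapsTo.restrict F (V ∩ F ⁻¹' Tᶜ) Tᶜ h)) → S ⊆ T

/-- The postsingular set of `F : V → Ĉ`: the closure of the forward orbit of the singular
values (iterated images taken where the iterates are defined). -/
def SpherePostsingular (F : OnePoint ℂ → OnePoint ℂ) (V S : Set (OnePoint ℂ)) :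
    Set (OnePoint ℂ) :=
  closure (⋃ n : ℕ, F^[n] '' {u : OnePoint ℂ | u ∈ S ∧ ∀ k < n, F^[k] u ∈ V})

/-- `π` is a holomorphic (universal) covering map from the unit disc onto `C ⊆ Ĉ`. -/
def SphereDiscCovering (π : ℂ → OnePoint ℂ) (C : Set (OnePoint ℂ)) : Prop :=
  (∀ a ∈ ball (0 : ℂ) 1, SphereMeroAt π a) ∧ π '' ball (0 : ℂ) 1 = C ∧
    ∃ h : MapsTo π (ball (0 : ℂ) 1) C,
      IsCoveringMap (MapsTo.restrict π (ball (0 : ℂ) 1) C h)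

/-- The Poincaré distance on the unit disc (for the metric `2|dz|/(1−|z|²)`). -/
noncomputable def discDist (a b : ℂ) : ℝ :=
  Real.log ((1 + ‖(a - b) / (1 - (starRingEnd ℂ) a * b)‖) /
    (1 - ‖(a - b) / (1 - (starRingEnd ℂ) a * b)‖))

/-- The hyperbolic distance on an open set `U ⊆ Ĉ`, induced (componentwise) by a holomorphic
universal covering `π : 𝔻 → U` from the Poincaré metric of the disc:
`d_U(x,y) = inf {d_𝔻(a,b) : π(a) = x, π(b) = y}` (and `∞` if `x, y` cannot be joined). -/
noncomputable def sphereHypDist (U : Set (OnePoint ℂ)) (x y : OnePoint ℂ) : ℝ≥0∞ :=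
  ⨅ (π : ℂ → OnePoint ℂ) (_ : SphereDiscCovering π (connectedComponentIn U x))
    (a : ℂ) (_ : a ∈ ball (0 : ℂ) 1 ∧ π a = x)
    (b : ℂ) (_ : b ∈ ball (0 : ℂ) 1 ∧ π b = y),
    ENNReal.ofReal (discDist a b)

/-- Hyperbolic distance from a point to a set, with `d_U(x, ∅) = ∞`. -/
noncomputable def sphereHypDistToSet (U : Set (OnePoint ℂ)) (x : OnePoint ℂ)
    (E : Set (OnePoint ℂ)) : ℝ≥0∞ :=
  ⨅ e ∈ E, sphereHypDist U x e

/-- The Lagrange identity behind the rotation invariance of the spherical metric. -/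
lemma norm_one_add_conj_mul_sq (a g : ℂ) :
    ‖1 + (starRingEnd ℂ) a * g‖ ^ 2 + ‖g - a‖ ^ 2 = (1 + ‖a‖ ^ 2) * (1 + ‖g‖ ^ 2) := by
  simp only [← Complex.normSq_eq_norm_sq, Complex.normSq_apply]
  simp
  ring

/-- The Lagrange identity behind the invariance of the Poincaré metric. -/
lemma norm_one_sub_conj_mul_sq (a g : ℂ) :
    ‖1 - (starRingEnd ℂ) a * g‖ ^ 2 - ‖g - a‖ ^ 2 = (1 - ‖a‖ ^ 2) * (1 - ‖g‖ ^ 2) := by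
  simp only [← Complex.normSq_eq_norm_sq, Complex.normSq_apply]
  simp
  ring

lemma tendsto_norm_sq_div_of_hasDerivAt {m : ℂ → ℂ} {d z₀ : ℂ} (hm : HasDerivAt m d z₀)
    (h0 : m z₀ = 0) :
    Tendsto (fun z => ‖m z‖ ^ 2 / ‖z - z₀‖ ^ 2) (𝓝[≠] z₀) (𝓝 (‖d‖ ^ 2)) := by
  have h := ((hasDerivAt_iff_tendsto_slope.1 hm).norm).pow 2
  refine h.congr fun z => ?_
  rw [slope_def_field, h0, sub_zero, norm_div, div_pow]

/-- A second order maximum principle: `log ‖E‖` is harmonic, so the remaining factors cannot have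
a positive Laplacian at a maximum. -/
lemma norm_sq_add_le_of_weighted_max {E m₁ m₂ k : ℂ → ℂ} {z₀ d₁ d₂ e : ℂ}
    (hE : AnalyticAt ℂ E z₀) (hE0 : E z₀ ≠ 0)
    (h₁ : HasDerivAt m₁ d₁ z₀) (h₁0 : m₁ z₀ = 0) (h₂ : HasDerivAt m₂ d₂ z₀) (h₂0 : m₂ z₀ = 0)
    (hk : HasDerivAt k e z₀) (hk0 : k z₀ = 0)
    (hmax : ∀ᶠ z in 𝓝 z₀, ‖E z‖ ^ 2 * ((1 - ‖k z‖ ^ 2) ^ 2 * (1 + ‖m₁ z‖ ^ 2) *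
      (1 + ‖m₂ z‖ ^ 2)) ≤ ‖E z₀‖ ^ 2) :
    ‖d₁‖ ^ 2 + ‖d₂‖ ^ 2 ≤ 2 * ‖e‖ ^ 2 := by
  by_contra! hlt
  have t₁ := tendsto_norm_sq_div_of_hasDerivAt h₁ h₁0
  have t₂ := tendsto_norm_sq_div_of_hasDerivAt h₂ h₂0
  have tk := tendsto_norm_sq_div_of_hasDerivAt hk hk0
  have ck : Tendsto (fun z => ‖k z‖ ^ 2) (𝓝[≠] z₀) (𝓝 0) := by
    have h : ContinuousAt (fun z => ‖k z‖ ^ 2) z₀ := hk.continuousAt.norm.pow 2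
    simpa [hk0] using h.tendsto.mono_left (nhdsWithin_le_nhds (s := {z₀}ᶜ))
  have key : Tendsto (fun z => ‖m₁ z‖ ^ 2 / ‖z - z₀‖ ^ 2 + ‖m₂ z‖ ^ 2 / ‖z - z₀‖ ^ 2
      - 2 * (‖k z‖ ^ 2 / ‖z - z₀‖ ^ 2)
      - 2 * ‖k z‖ ^ 2 * (‖m₁ z‖ ^ 2 / ‖z - z₀‖ ^ 2 + ‖m₂ z‖ ^ 2 / ‖z - z₀‖ ^ 2)) (𝓝[≠] z₀)
      (𝓝 (‖d₁‖ ^ 2 + ‖d₂‖ ^ 2 - 2 * ‖e‖ ^ 2 - 2 * 0 * (‖d₁‖ ^ 2 + ‖d₂‖ ^ 2))) :=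
    ((t₁.add t₂).sub (tk.const_mul 2)).sub ((ck.const_mul 2).mul (t₁.add t₂))
  have hpos : ∀ᶠ z in 𝓝[≠] z₀, ‖E z‖ < ‖E z₀‖ := by
    filter_upwards [key.eventually (lt_mem_nhds (a := 0) (by linarith)),
      hmax.filter_mono nhdsWithin_le_nhds, self_mem_nhdsWithin] with z hz hm hne
    have hzn : 0 < ‖z - z₀‖ ^ 2 := by
      have : z - z₀ ≠ 0 := sub_ne_zero.2 hne
      positivity
    have hz' : 0 < ‖m₁ z‖ ^ 2 + ‖m₂ z‖ ^ 2 - 2 * ‖k z‖ ^ 2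
        - 2 * ‖k z‖ ^ 2 * (‖m₁ z‖ ^ 2 + ‖m₂ z‖ ^ 2) := by
      have := mul_pos hz hzn
      have e : ∀ a : ℝ, a / ‖z - z₀‖ ^ 2 * ‖z - z₀‖ ^ 2 = a := fun a => div_mul_cancel₀ _ hzn.ne'
      linear_combination this + e (‖m₁ z‖ ^ 2) + e (‖m₂ z‖ ^ 2) - 2 * e (‖k z‖ ^ 2)
        - 2 * ‖k z‖ ^ 2 * (e (‖m₁ z‖ ^ 2) + e (‖m₂ z‖ ^ 2))
    set A := ‖m₁ z‖ ^ 2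
    set B := ‖m₂ z‖ ^ 2
    set K := ‖k z‖ ^ 2
    have hA : 0 ≤ A := sq_nonneg _
    have hB : 0 ≤ B := sq_nonneg _
    have h1 : 1 < (1 - K) ^ 2 * (1 + A) * (1 + B) := by
      nlinarith [mul_nonneg hA hB, mul_nonneg (mul_nonneg hA hB) (sq_nonneg (1 - K)),
        mul_nonneg (sq_nonneg K) hA, mul_nonneg (sq_nonneg K) hB, sq_nonneg K]
    have hEz : 0 < ‖E z₀‖ ^ 2 := by positivity
    by_contra! hle
    have hsq : ‖E z₀‖ ^ 2 ≤ ‖E z‖ ^ 2 := by gcongr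
    nlinarith
  have hloc : IsLocalMax (norm ∘ E) z₀ := by
    have : ∀ᶠ z in 𝓝 z₀, z ≠ z₀ → ‖E z‖ < ‖E z₀‖ := eventually_nhdsWithin_iff.1 hpos
    filter_upwards [this] with z hz
    by_cases h : z = z₀
    · simp [h]
    · exact (hz h).le
  have hc := Complex.eventually_eq_of_isLocalMax_norm
    (hE.eventually_analyticAt.mono fun z h => h.differentiableAt) hloc
  obtain ⟨z, hz1, hz2⟩ := (hpos.and (hc.filter_mono nhdsWithin_le_nhds)).exists
  rw [hz2] at hz1
  exact lt_irrefl _ hz1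

/-- A local analytic sixth root. -/
lemma AnalyticAt.exists_pow_six_eq {g : ℂ → ℂ} {z₀ : ℂ} (hg : AnalyticAt ℂ g z₀)
    (h0 : g z₀ ≠ 0) :
    ∃ P : ℂ → ℂ, AnalyticAt ℂ P z₀ ∧ ∀ z, P z ^ 6 = g z := by
  refine ⟨fun z => (g z₀) ^ (1 / 6 : ℂ) * (g z / g z₀) ^ (1 / 6 : ℂ), ?_, fun z => ?_⟩
  · refine analyticAt_const.mul (AnalyticAt.cpow (hg.div analyticAt_const h0) analyticAt_const ?_)
    simp [h0]
  · have h : ∀ w : ℂ, (w ^ (1 / 6 : ℂ)) ^ 6 = w := fun w => by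
      simp
    rw [mul_pow, h, h, mul_div_cancel₀ _ h0]

/-- The radial factor of the square of Robinson's metric, in terms of `x = ‖w‖ ^ (1/6)`. -/
noncomputable def robinsonFactor (w : ℂ) : ℝ :=
  (1 + (‖w‖ ^ (1 / 6 : ℝ)) ^ 2) / (‖w‖ ^ (1 / 6 : ℝ)) ^ 10

lemma robinsonFactor_eq {w p : ℂ} (h : p ^ 6 = w) :
    robinsonFactor w = (1 + ‖p‖ ^ 2) / ‖p‖ ^ 10 := by
  have : ‖w‖ ^ (1 / 6 : ℝ) = ‖p‖ := by
    rw [← h, norm_pow, ← Real.rpow_natCast, ← Real.rpow_mul (norm_nonneg _)]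
    norm_num
  rw [robinsonFactor, this]

lemma exists_pow_six (w : ℂ) : ∃ p : ℂ, p ^ 6 = w :=
  ⟨w ^ ((6 : ℕ)⁻¹ : ℂ), Complex.cpow_nat_inv_pow w (by norm_num)⟩

lemma continuousAt_robinsonFactor {w : ℂ} (h : w ≠ 0) : ContinuousAt robinsonFactor w := by
  have h6 : ContinuousAt (fun w : ℂ => ‖w‖ ^ (1 / 6 : ℝ)) w :=
    continuous_norm.continuousAt.rpow_const (Or.inr (by norm_num))
  refine ContinuousAt.div (continuousAt_const.add (h6.pow 2)) (h6.pow 10) ?_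
  have : 0 < ‖w‖ := norm_pos_iff.2 h
  positivity

/-- Numerical comparison giving the curvature bound for Robinson's metric. -/
lemma curvature_ineq {x y G r : ℝ} (hx : 0 < x) (hy : 0 < y) (hxy : 1 ≤ x ^ 6 + y ^ 6)
    (h : G * (1 / (x ^ 10 * (1 + x ^ 2) ^ 2) + 1 / (y ^ 10 * (1 + y ^ 2) ^ 2)) ≤ r) (hG : 0 ≤ G) :
    G * (((1 + x ^ 2) / x ^ 10) * ((1 + y ^ 2) / y ^ 10)) ≤ 162 * r := by
  wlog hle : x ≤ y generalizing x y
  · have := this hy hx (by linarith) (by rwa [add_comm]) (by linarith)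
    rwa [mul_comm ((1 + x ^ 2) / x ^ 10)]
  have hy2 : 1 / 2 ≤ y ^ 2 := by
    by_contra! hlt
    have h6 : x ^ 6 ≤ y ^ 6 := by gcongr
    have : y ^ 6 < (1 / 2) ^ 3 := by
      calc y ^ 6 = (y ^ 2) ^ 3 := by ring
        _ < _ := by gcongr
    norm_num at this
    linarith
  have h1 : G * (1 / (x ^ 10 * (1 + x ^ 2) ^ 2)) ≤ r := by
    refine le_trans ?_ h
    gcongr
    have : 0 ≤ 1 / (y ^ 10 * (1 + y ^ 2) ^ 2) := by positivity
    linarith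
  have hx2 : x ^ 2 ≤ y ^ 2 := by gcongr
  have h2 : (1 + x ^ 2) ^ 3 * (1 + y ^ 2) ≤ 162 * y ^ 10 := by
    have a : 1 + x ^ 2 ≤ 3 * y ^ 2 := by linarith
    have b : 1 + y ^ 2 ≤ 3 * y ^ 2 := by linarith
    calc (1 + x ^ 2) ^ 3 * (1 + y ^ 2) ≤ (3 * y ^ 2) ^ 3 * (3 * y ^ 2) := by gcongr
      _ = 81 * y ^ 8 := by ring
      _ ≤ 162 * y ^ 10 := by
        have : 0 ≤ y ^ 8 := by positivity
        nlinarith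
  have h3 : ((1 + x ^ 2) / x ^ 10) * ((1 + y ^ 2) / y ^ 10)
      ≤ 162 * (1 / (x ^ 10 * (1 + x ^ 2) ^ 2)) := by
    rw [div_mul_div_comm, mul_one_div, div_le_div_iff₀ (by positivity) (by positivity)]
    have := mul_le_mul_of_nonneg_left h2 (show 0 ≤ x ^ 10 by positivity)
    calc _ = x ^ 10 * ((1 + x ^ 2) ^ 3 * (1 + y ^ 2)) := by ring
      _ ≤ _ := this
      _ = _ := by ring
  calc _ ≤ G * (162 * (1 / (x ^ 10 * (1 + x ^ 2) ^ 2))) := by gcongr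
    _ = 162 * (G * (1 / (x ^ 10 * (1 + x ^ 2) ^ 2))) := by ring
    _ ≤ _ := by gcongr

/-- Robinson's metric dominates the spherical metric. -/
lemma one_le_robinson_mul {w : ℂ} (h0 : w ≠ 0) (h1 : w ≠ 1) :
    1 ≤ 16 * (1 + ‖w‖ ^ 2) ^ 2 * (robinsonFactor w * robinsonFactor (w - 1)) := by
  obtain ⟨p, hp⟩ := exists_pow_six w
  obtain ⟨q, hq⟩ := exists_pow_six (w - 1)
  rw [robinsonFactor_eq hp, robinsonFactor_eq hq]
  have hx : 0 < ‖p‖ := norm_pos_iff.2 (by rintro rfl; simp at hp; exact h0 hp.symm)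
  have hy : 0 < ‖q‖ := norm_pos_iff.2 (by
    rintro rfl; simp at hq; exact h1 (sub_eq_zero.1 hq.symm))
  have hw : ‖w‖ = ‖p‖ ^ 6 := by rw [← hp, norm_pow]
  have hyx : ‖q‖ ^ 6 ≤ 1 + ‖p‖ ^ 6 := by
    rw [← norm_pow, ← norm_pow, hp, hq]
    calc _ ≤ ‖w‖ + ‖(1 : ℂ)‖ := norm_sub_le _ _
      _ = _ := by rw [norm_one, add_comm]
  rw [hw]
  set x := ‖p‖
  set y := ‖q‖
  have hcube : (x ^ 8 * y ^ 8) ^ 3 ≤ (16 * (1 + (x ^ 6) ^ 2) ^ 2) ^ 3 := by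
    set s := x ^ 6 with hs
    have hs0 : 0 ≤ s := by positivity
    calc (x ^ 8 * y ^ 8) ^ 3 = (x ^ 6) ^ 4 * (y ^ 6) ^ 4 := by ring
      _ ≤ (1 + s) ^ 4 * (1 + s) ^ 4 := by
        rw [← hs]; gcongr; linarith
      _ = ((1 + s) ^ 2) ^ 4 := by ring
      _ ≤ (2 * (1 + s ^ 2)) ^ 4 := by
        gcongr; nlinarith [sq_nonneg (1 - s)]
      _ = 16 * (1 + s ^ 2) ^ 4 * 1 := by ring
      _ ≤ 16 * (1 + s ^ 2) ^ 4 * (1 + s ^ 2) ^ 2 := by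
        gcongr; exact one_le_pow₀ (by nlinarith)
      _ ≤ 4096 * ((1 + s ^ 2) ^ 4 * (1 + s ^ 2) ^ 2) := by
        have : 0 ≤ (1 + s ^ 2) ^ 4 * (1 + s ^ 2) ^ 2 := by positivity
        linarith
      _ = _ := by ring
  have h8 : x ^ 8 * y ^ 8 ≤ 16 * (1 + (x ^ 6) ^ 2) ^ 2 :=
    le_of_pow_le_pow_left₀ (by norm_num) (by positivity) hcube
  rw [div_mul_div_comm, mul_div_assoc', le_div_iff₀ (by positivity)]
  calc 1 * (x ^ 10 * y ^ 10) = (x ^ 8 * y ^ 8) * (x ^ 2 * y ^ 2) := by ring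
    _ ≤ (16 * (1 + (x ^ 6) ^ 2) ^ 2) * ((1 + x ^ 2) * (1 + y ^ 2)) := by
      gcongr <;> linarith

/-- **Landau's theorem**, spherical form: a holomorphic function on a neighbourhood of the closed
unit disc omitting `0` and `1` has universally bounded spherical derivative at `0`. -/
theorem landau_spherical {g : ℂ → ℂ} {O : Set ℂ} (hO : IsOpen O) (hB : closedBall 0 1 ⊆ O)
    (hg : DifferentiableOn ℂ g O) (h0 : ∀ z ∈ O, g z ≠ 0) (h1 : ∀ z ∈ O, g z ≠ 1) :
    ‖deriv g 0‖ ≤ 432 * (1 + ‖g 0‖ ^ 2) := by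
  have han : ∀ z ∈ O, AnalyticAt ℂ g z := fun z hz => hg.analyticAt (hO.mem_nhds hz)
  set L : ℂ → ℝ := fun w => robinsonFactor w * robinsonFactor (w - 1) with hL
  set Φ : ℂ → ℝ := fun z => (1 - ‖z‖ ^ 2) ^ 2 * ‖deriv g z‖ ^ 2 * L (g z) with hΦ
  have hcont : ContinuousOn Φ (closedBall 0 1) := by
    intro z hz
    have hz := hB hz
    have hgc := (han z hz).continuousAt
    have hg1 : ContinuousAt (fun z => g z - 1) z := hgc.sub continuousAt_const
    have e1 : ContinuousAt (fun z => robinsonFactor (g z)) z :=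
      ContinuousAt.comp (f := g) (continuousAt_robinsonFactor (h0 z hz)) hgc
    have e2 : ContinuousAt (fun z => robinsonFactor (g z - 1)) z :=
      ContinuousAt.comp (f := fun z => g z - 1)
        (continuousAt_robinsonFactor (sub_ne_zero.2 (h1 z hz))) hg1
    have e3 : ContinuousAt (fun z : ℂ => (1 - ‖z‖ ^ 2) ^ 2) z := by fun_prop
    exact ((e3.mul ((han z hz).deriv.continuousAt.norm.pow 2)).mul
      (e1.mul e2)).continuousWithinAt
  obtain ⟨z₀, hz₀, hmax⟩ := (isCompact_closedBall (0 : ℂ) 1).exists_isMaxOn ⟨0, by simp⟩ hcont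
  have hbound : Φ z₀ ≤ 11664 := by
    by_cases hz1 : ‖z₀‖ = 1
    · simp [hΦ, hz1]
    by_cases hd : deriv g z₀ = 0
    · simp [hΦ, hd]
    have hlt : ‖z₀‖ < 1 := lt_of_le_of_ne (by simpa using hz₀) hz1
    have hzO := hB hz₀
    obtain ⟨P, hPa, hP⟩ := (han z₀ hzO).exists_pow_six_eq (h0 z₀ hzO)
    obtain ⟨Q, hQa, hQ⟩ := AnalyticAt.exists_pow_six_eq (g := fun z => g z - 1)
      ((han z₀ hzO).sub analyticAt_const) (sub_ne_zero.2 (h1 z₀ hzO))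
    have hP0 : P z₀ ≠ 0 := fun h => h0 z₀ hzO (by rw [← hP, h]; simp)
    have hQ0 : Q z₀ ≠ 0 := fun h => h1 z₀ hzO (sub_eq_zero.1 (by rw [← hQ z₀, h]; simp))
    have hgd : HasDerivAt g (deriv g z₀) z₀ := (han z₀ hzO).differentiableAt.hasDerivAt
    have hPd : 6 * P z₀ ^ 5 * deriv P z₀ = deriv g z₀ := by
      have := (hPa.differentiableAt.hasDerivAt.pow 6).unique
        (hgd.congr_of_eventuallyEq (Eventually.of_forall fun z => by simp [hP]))
      simpa using this
    have hQd : 6 * Q z₀ ^ 5 * deriv Q z₀ = deriv g z₀ := by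
      have := (hQa.differentiableAt.hasDerivAt.pow 6).unique
        ((hgd.sub_const 1).congr_of_eventuallyEq (Eventually.of_forall fun z => by simp [hQ]))
      simpa using this
    set p := P z₀ with hp
    set q := Q z₀ with hq
    have hself : ∀ a : ℂ, 1 + (starRingEnd ℂ) a * a = ((1 + ‖a‖ ^ 2 : ℝ) : ℂ) := fun a => by
      rw [mul_comm, Complex.mul_conj, Complex.normSq_eq_norm_sq]; push_cast; ring
    have hselfz : 1 - (starRingEnd ℂ) z₀ * z₀ = ((1 - ‖z₀‖ ^ 2 : ℝ) : ℂ) := by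
      rw [mul_comm, Complex.mul_conj, Complex.normSq_eq_norm_sq]; push_cast; ring
    have hposz : 0 < 1 - ‖z₀‖ ^ 2 := by nlinarith [norm_nonneg z₀]
    have hne : ∀ a : ℂ, 1 + (starRingEnd ℂ) a * a ≠ 0 := fun a => by
      rw [hself]; exact_mod_cast (by positivity : (1 + ‖a‖ ^ 2 : ℝ) ≠ 0)
    have hnez : 1 - (starRingEnd ℂ) z₀ * z₀ ≠ 0 := by
      rw [hselfz]; exact_mod_cast hposz.ne'
    -- the Möbius-normalized functions
    have mder : ∀ R : ℂ → ℂ, AnalyticAt ℂ R z₀ → HasDerivAt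
        (fun z => (R z - R z₀) / (1 + (starRingEnd ℂ) (R z₀) * R z))
        (deriv R z₀ / ((1 + ‖R z₀‖ ^ 2 : ℝ) : ℂ)) z₀ := fun R hR => by
      have hR' := hR.differentiableAt.hasDerivAt
      have := (hR'.sub_const (R z₀)).div ((hR'.const_mul ((starRingEnd ℂ) (R z₀))).const_add 1)
        (hne _)
      refine this.congr_deriv ?_
      rw [sub_self, zero_mul, sub_zero, ← hself]
      field_simp [hne (R z₀)]
    have kder : HasDerivAt (fun z => (z - z₀) / (1 - (starRingEnd ℂ) z₀ * z))
        (1 / ((1 - ‖z₀‖ ^ 2 : ℝ) : ℂ)) z₀ := by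
      have := ((hasDerivAt_id z₀).sub_const z₀).div
        (((hasDerivAt_id z₀).const_mul ((starRingEnd ℂ) z₀)).const_sub 1) (by simpa using hnez)
      refine this.congr_deriv ?_
      simp only [id]
      rw [sub_self, zero_mul, sub_zero, ← hselfz]
      field_simp
    set E : ℂ → ℂ := fun z => (1 - (starRingEnd ℂ) z₀ * z) ^ 2 * deriv g z *
      (1 + (starRingEnd ℂ) p * P z) * (1 + (starRingEnd ℂ) q * Q z) / (P z * Q z) ^ 5 with hE
    have hEa : AnalyticAt ℂ E z₀ := by
      have a1 : AnalyticAt ℂ (fun z => (1 - (starRingEnd ℂ) z₀ * z) ^ 2) z₀ := by fun_prop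
      have a2 := (han z₀ hzO).deriv
      exact ((((a1.mul a2).mul (analyticAt_const.add (analyticAt_const.mul hPa))).mul
        (analyticAt_const.add (analyticAt_const.mul hQa))).div ((hPa.mul hQa).pow 5)
        (pow_ne_zero _ (mul_ne_zero hP0 hQ0)))
    have hE0 : E z₀ ≠ 0 := by
      refine div_ne_zero (mul_ne_zero (mul_ne_zero (mul_ne_zero (pow_ne_zero _ hnez) hd) ?_) ?_)
        (pow_ne_zero _ (mul_ne_zero hP0 hQ0))
      · exact hne p
      · exact hne q
    have hΦE : ∀ z, 1 - (starRingEnd ℂ) z₀ * z ≠ 0 → 1 + (starRingEnd ℂ) p * P z ≠ 0 →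
        1 + (starRingEnd ℂ) q * Q z ≠ 0 → P z ≠ 0 → Q z ≠ 0 →
        ‖E z‖ ^ 2 * ((1 - ‖(z - z₀) / (1 - (starRingEnd ℂ) z₀ * z)‖ ^ 2) ^ 2
          * (1 + ‖(P z - p) / (1 + (starRingEnd ℂ) p * P z)‖ ^ 2)
          * (1 + ‖(Q z - q) / (1 + (starRingEnd ℂ) q * Q z)‖ ^ 2))
        = ((1 - ‖z₀‖ ^ 2) ^ 2 * (1 + ‖p‖ ^ 2) * (1 + ‖q‖ ^ 2)) * Φ z := by
      intro z b1 b2 b3 b4 b5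
      have c1 : 1 - ‖(z - z₀) / (1 - (starRingEnd ℂ) z₀ * z)‖ ^ 2
          = (1 - ‖z₀‖ ^ 2) * (1 - ‖z‖ ^ 2) / ‖1 - (starRingEnd ℂ) z₀ * z‖ ^ 2 := by
        rw [norm_div, div_pow, ← norm_one_sub_conj_mul_sq, sub_div, div_self (by positivity)]
      have c2 : ∀ a b : ℂ, 1 + (starRingEnd ℂ) a * b ≠ 0 →
          1 + ‖(b - a) / (1 + (starRingEnd ℂ) a * b)‖ ^ 2
          = (1 + ‖a‖ ^ 2) * (1 + ‖b‖ ^ 2) / ‖1 + (starRingEnd ℂ) a * b‖ ^ 2 := fun a b h => by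
        rw [norm_div, div_pow, ← norm_one_add_conj_mul_sq, add_div, div_self (by positivity)]
      rw [c1, c2 _ _ b2, c2 _ _ b3]
      simp only [hE, hΦ, hL, robinsonFactor_eq (hP z), robinsonFactor_eq (hQ z), norm_mul,
        norm_div, norm_pow]
      have d1 : ‖1 - (starRingEnd ℂ) z₀ * z‖ ≠ 0 := norm_ne_zero_iff.2 b1
      have d2 : ‖1 + (starRingEnd ℂ) p * P z‖ ≠ 0 := norm_ne_zero_iff.2 b2
      have d3 : ‖1 + (starRingEnd ℂ) q * Q z‖ ≠ 0 := norm_ne_zero_iff.2 b3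
      have d4 : ‖P z‖ ≠ 0 := norm_ne_zero_iff.2 b4
      have d5 : ‖Q z‖ ≠ 0 := norm_ne_zero_iff.2 b5
      generalize ‖1 - (starRingEnd ℂ) z₀ * z‖ = e1 at *
      generalize ‖1 + (starRingEnd ℂ) p * P z‖ = e2 at *
      generalize ‖1 + (starRingEnd ℂ) q * Q z‖ = e3 at *
      generalize ‖P z‖ = e4 at *
      generalize ‖Q z‖ = e5 at *
      field_simp
    have hev : ∀ᶠ z in 𝓝 z₀, ‖E z‖ ^ 2 * ((1 - ‖(z - z₀) / (1 - (starRingEnd ℂ) z₀ * z)‖ ^ 2) ^ 2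
          * (1 + ‖(P z - p) / (1 + (starRingEnd ℂ) p * P z)‖ ^ 2)
          * (1 + ‖(Q z - q) / (1 + (starRingEnd ℂ) q * Q z)‖ ^ 2)) ≤ ‖E z₀‖ ^ 2 := by
      have hE00 : ‖E z₀‖ ^ 2 = ((1 - ‖z₀‖ ^ 2) ^ 2 * (1 + ‖p‖ ^ 2) * (1 + ‖q‖ ^ 2)) * Φ z₀ := by
        rw [← hΦE z₀ hnez (hne p) (hne q) hP0 hQ0]
        simp [← hp, ← hq]
      have b1 : ∀ᶠ z in 𝓝 z₀, 1 - (starRingEnd ℂ) z₀ * z ≠ 0 :=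
        ContinuousAt.eventually_ne (by fun_prop) hnez
      have b2 : ∀ᶠ z in 𝓝 z₀, 1 + (starRingEnd ℂ) p * P z ≠ 0 :=
        ContinuousAt.eventually_ne
          (continuousAt_const.add (continuousAt_const.mul hPa.continuousAt)) (hne p)
      have b3 : ∀ᶠ z in 𝓝 z₀, 1 + (starRingEnd ℂ) q * Q z ≠ 0 :=
        ContinuousAt.eventually_ne
          (continuousAt_const.add (continuousAt_const.mul hQa.continuousAt)) (hne q)
      filter_upwards [b1, b2, b3, hPa.continuousAt.eventually_ne hP0,
        hQa.continuousAt.eventually_ne hQ0, closedBall_mem_nhds_of_mem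
          (show z₀ ∈ ball (0 : ℂ) 1 by simpa using hlt)] with z c1 c2 c3 c4 c5 c6
      rw [hΦE z c1 c2 c3 c4 c5, hE00]
      have : Φ z ≤ Φ z₀ := hmax c6
      gcongr
    have hcurv := norm_sq_add_le_of_weighted_max hEa hE0 (mder P hPa) (by simp) (mder Q hQa)
      (by simp) kder (by simp) hev
    have hx : 0 < ‖p‖ := norm_pos_iff.2 hP0
    have hy : 0 < ‖q‖ := norm_pos_iff.2 hQ0
    have nP : ‖deriv P z₀ / ((1 + ‖p‖ ^ 2 : ℝ) : ℂ)‖ ^ 2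
        = ‖deriv g z₀‖ ^ 2 / 36 * (1 / (‖p‖ ^ 10 * (1 + ‖p‖ ^ 2) ^ 2)) := by
      rw [← hPd, norm_div, Complex.norm_real, Real.norm_of_nonneg (by positivity)]
      simp only [norm_mul, norm_pow, Complex.norm_ofNat]
      field_simp
      ring
    have nQ : ‖deriv Q z₀ / ((1 + ‖q‖ ^ 2 : ℝ) : ℂ)‖ ^ 2
        = ‖deriv g z₀‖ ^ 2 / 36 * (1 / (‖q‖ ^ 10 * (1 + ‖q‖ ^ 2) ^ 2)) := by
      rw [← hQd, norm_div, Complex.norm_real, Real.norm_of_nonneg (by positivity)]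
      simp only [norm_mul, norm_pow, Complex.norm_ofNat]
      field_simp
      ring
    rw [← hp, ← hq, nP, nQ, ← mul_add, norm_div, Complex.norm_real,
      Real.norm_of_nonneg hposz.le, norm_one] at hcurv
    have hsum : 1 ≤ ‖p‖ ^ 6 + ‖q‖ ^ 6 := by
      have e : p ^ 6 - q ^ 6 = 1 := by
        have := hQ z₀
        rw [hp, hq, hP, this]; ring
      rw [← norm_pow, ← norm_pow]
      calc (1 : ℝ) = ‖p ^ 6 - q ^ 6‖ := by rw [e, norm_one]
        _ ≤ _ := norm_sub_le _ _
    have hfin := curvature_ineq hx hy hsum hcurv (by positivity)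
    simp only [hΦ, hL, robinsonFactor_eq (hP z₀), robinsonFactor_eq (hQ z₀), ← hp, ← hq]
    rw [mul_assoc, ← le_div_iff₀' (by positivity)]
    calc _ = 36 * (‖deriv g z₀‖ ^ 2 / 36 *
          ((1 + ‖p‖ ^ 2) / ‖p‖ ^ 10 * ((1 + ‖q‖ ^ 2) / ‖q‖ ^ 10))) := by ring
      _ ≤ 36 * (162 * (2 * (1 / (1 - ‖z₀‖ ^ 2)) ^ 2)) := by gcongr
      _ = _ := by field_simp; norm_num
  have h00 : Φ 0 ≤ 11664 := (hmax (show (0 : ℂ) ∈ closedBall 0 1 by simp)).trans hbound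
  have h0O : (0 : ℂ) ∈ O := hB (by simp)
  have hrob := one_le_robinson_mul (h0 0 h0O) (h1 0 h0O)
  simp only [hΦ, hL, norm_zero] at h00
  have hsq : ‖deriv g 0‖ ^ 2 ≤ (432 * (1 + ‖g 0‖ ^ 2)) ^ 2 := by
    calc ‖deriv g 0‖ ^ 2 = ‖deriv g 0‖ ^ 2 * 1 := by ring
      _ ≤ ‖deriv g 0‖ ^ 2 * (16 * (1 + ‖g 0‖ ^ 2) ^ 2 *
          (robinsonFactor (g 0) * robinsonFactor (g 0 - 1))) := by gcongr
      _ = 16 * (1 + ‖g 0‖ ^ 2) ^ 2 * ((1 - 0 ^ 2) ^ 2 * ‖deriv g 0‖ ^ 2 *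
          (robinsonFactor (g 0) * robinsonFactor (g 0 - 1))) := by ring
      _ ≤ 16 * (1 + ‖g 0‖ ^ 2) ^ 2 * 11664 := by gcongr
      _ = _ := by ring
  exact le_of_sq_le_sq hsq (by positivity)

lemma norm_sub_sq_stereographic (u v : ℂ) :
    ‖u - v‖ ^ 2 / ((1 + ‖u‖ ^ 2) * (1 + ‖v‖ ^ 2)) =
      ‖(1 + ‖u‖ ^ 2)⁻¹ • u - (1 + ‖v‖ ^ 2)⁻¹ • v‖ ^ 2 +
        ((1 + ‖u‖ ^ 2)⁻¹ - (1 + ‖v‖ ^ 2)⁻¹) ^ 2 := by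
  have hu : 1 + ‖u‖ ^ 2 ≠ 0 := by positivity
  have hv : 1 + ‖v‖ ^ 2 ≠ 0 := by positivity
  simp only [← Complex.normSq_eq_norm_sq, Complex.normSq_apply] at *
  simp only [Complex.sub_re, Complex.sub_im, Complex.real_smul, Complex.mul_re, Complex.mul_im,
    Complex.ofReal_re, Complex.ofReal_im, zero_mul, sub_zero, add_zero]
  field_simp
  ring

/-- A curve whose spherical speed is at most `B` has end points at chordal distance `O(B)`. -/
lemma norm_sub_le_of_spherical_speed {γ γ' : ℝ → ℂ} {B : ℝ}
    (hγ : ∀ t ∈ Icc (0 : ℝ) 1, HasDerivAt γ (γ' t) t)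
    (hB : ∀ t ∈ Icc (0 : ℝ) 1, ‖γ' t‖ ≤ B * (1 + ‖γ t‖ ^ 2)) :
    2 * dist (γ 0) (γ 1) / (√(1 + ‖γ 0‖ ^ 2) * √(1 + ‖γ 1‖ ^ 2)) ≤ 8 * B := by
  have hB0 : 0 ≤ B := by
    have := (norm_nonneg _).trans (hB 0 (by simp))
    exact nonneg_of_mul_nonneg_left this (by positivity)
  have hn : ∀ t ∈ Icc (0 : ℝ) 1,
      HasDerivAt (fun t => (1 + ‖γ t‖ ^ 2)⁻¹)
        (-(2 * inner ℝ (γ t) (γ' t)) / (1 + ‖γ t‖ ^ 2) ^ 2) t := fun t ht =>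
    ((hγ t ht).norm_sq.const_add 1).inv (by positivity)
  have hin : ∀ t ∈ Icc (0 : ℝ) 1, ‖-(2 * inner ℝ (γ t) (γ' t)) / (1 + ‖γ t‖ ^ 2) ^ 2‖ * 
      (1 + ‖γ t‖ ^ 2) ≤ 2 * ‖γ t‖ * B := fun t ht => by
    rw [norm_div, norm_neg, norm_mul, Real.norm_of_nonneg (r := (1 + ‖γ t‖ ^ 2) ^ 2) (by positivity)]
    have h1 := norm_inner_le_norm (𝕜 := ℝ) (γ t) (γ' t)
    have h2 := hB t ht
    rw [div_mul_eq_mul_div, div_le_iff₀ (by positivity), Real.norm_of_nonneg (r := 2) (by norm_num)]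
    calc 2 * ‖inner ℝ (γ t) (γ' t)‖ * (1 + ‖γ t‖ ^ 2)
        ≤ 2 * (‖γ t‖ * (B * (1 + ‖γ t‖ ^ 2))) * (1 + ‖γ t‖ ^ 2) := by
          gcongr; exact h1.trans (by gcongr)
      _ = _ := by ring
  have hY := norm_image_sub_le_of_norm_deriv_le_segment_01' (C := B)
    (fun t ht => (hn t ht).hasDerivWithinAt) (fun t ht => by
      have h := hin t (Ico_subset_Icc_self ht)
      refine le_of_mul_le_mul_right (h.trans ?_) (by positivity : 0 < 1 + ‖γ t‖ ^ 2)
      nlinarith [mul_nonneg hB0 (sq_nonneg (1 - ‖γ t‖))])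
  have hX := norm_image_sub_le_of_norm_deriv_le_segment_01' (C := 3 * B)
    (fun t ht => ((hn t ht).smul (hγ t ht)).hasDerivWithinAt) (fun t ht => by
      have ht := Ico_subset_Icc_self ht
      have h := hin t ht
      refine (norm_add_le _ _).trans ?_
      rw [norm_smul, norm_smul, norm_inv, Real.norm_of_nonneg (r := 1 + ‖γ t‖ ^ 2) (by positivity)]
      have e1 : (1 + ‖γ t‖ ^ 2)⁻¹ * ‖γ' t‖ ≤ B := by
        rw [inv_mul_le_iff₀ (by positivity), mul_comm]; exact hB t ht
      have e2 : ‖-(2 * inner ℝ (γ t) (γ' t)) / (1 + ‖γ t‖ ^ 2) ^ 2‖ * ‖γ t‖ ≤ 2 * B := by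
        refine le_of_mul_le_mul_right ?_ (by positivity : 0 < 1 + ‖γ t‖ ^ 2)
        calc _ = ‖-(2 * inner ℝ (γ t) (γ' t)) / (1 + ‖γ t‖ ^ 2) ^ 2‖ * (1 + ‖γ t‖ ^ 2) * ‖γ t‖ := by
              ring
          _ ≤ 2 * ‖γ t‖ * B * ‖γ t‖ := by gcongr
          _ ≤ _ := by nlinarith
      linarith)
  have hs := norm_sub_sq_stereographic (γ 1) (γ 0)
  have hle : ‖γ 1 - γ 0‖ ^ 2 / ((1 + ‖γ 1‖ ^ 2) * (1 + ‖γ 0‖ ^ 2)) ≤ (4 * B) ^ 2 := by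
    rw [hs, ← sq_abs ((1 + ‖γ 1‖ ^ 2)⁻¹ - _), ← Real.norm_eq_abs]
    have a1 : ‖(1 + ‖γ 1‖ ^ 2)⁻¹ • γ 1 - (1 + ‖γ 0‖ ^ 2)⁻¹ • γ 0‖ ^ 2 ≤ (3 * B) ^ 2 :=
      pow_le_pow_left₀ (norm_nonneg _) hX 2
    have a2 := pow_le_pow_left₀ (norm_nonneg _) hY 2
    nlinarith [sq_nonneg B]
  have h2 : ‖γ 1 - γ 0‖ / (√(1 + ‖γ 1‖ ^ 2) * √(1 + ‖γ 0‖ ^ 2)) ≤ 4 * B := by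
    refine le_of_sq_le_sq ?_ (by positivity)
    rwa [div_pow, mul_pow, Real.sq_sqrt (by positivity), Real.sq_sqrt (by positivity)]
  rw [dist_comm, dist_eq_norm, mul_div_assoc, mul_comm (√(1 + ‖γ 0‖ ^ 2))]
  linarith

/-- **Schottky–Landau estimate**: functions omitting `0` and `1` are uniformly Lipschitz for the
chordal metric. -/
theorem chordal_le_of_omits {g : ℂ → ℂ} {c : ℂ} {R : ℝ} (hR : 0 < R)
    (hg : DifferentiableOn ℂ g (ball c R)) (h0 : ∀ z ∈ ball c R, g z ≠ 0)
    (h1 : ∀ z ∈ ball c R, g z ≠ 1) {z : ℂ} (hz : z ∈ ball c (R / 2)) :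
    2 * dist (g c) (g z) / (√(1 + ‖g c‖ ^ 2) * √(1 + ‖g z‖ ^ 2)) ≤ 13824 / R * ‖z - c‖ := by
  have hder : ∀ w ∈ ball c (R / 2), ‖deriv g w‖ ≤ 1728 / R * (1 + ‖g w‖ ^ 2) := by
    intro w hw
    set h : ℂ → ℂ := fun ζ => g (w + (R / 4 : ℝ) * ζ) with hh
    set O : Set ℂ := (fun ζ : ℂ => w + (R / 4 : ℝ) * ζ) ⁻¹' ball c R
    have hcont : Continuous (fun ζ : ℂ => w + (R / 4 : ℝ) * ζ) := by fun_prop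
    have hsub : closedBall 0 1 ⊆ O := by
      intro ζ hζ
      rw [mem_closedBall, dist_zero_right] at hζ
      rw [mem_ball, dist_eq_norm] at hw
      show _ ∈ ball c R
      rw [mem_ball, dist_eq_norm]
      calc ‖w + (R / 4 : ℝ) * ζ - c‖ = ‖(w - c) + (R / 4 : ℝ) * ζ‖ := by ring_nf
        _ ≤ ‖w - c‖ + ‖((R / 4 : ℝ) : ℂ) * ζ‖ := norm_add_le _ _
        _ = ‖w - c‖ + R / 4 * ‖ζ‖ := by
          rw [norm_mul, Complex.norm_real, Real.norm_of_nonneg (by positivity)]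
        _ < R / 2 + R / 2 := by nlinarith
        _ = R := by ring
    have hd : DifferentiableOn ℂ h O := hg.comp (by fun_prop) (fun ζ hζ => hζ)
    have key := landau_spherical (isOpen_ball.preimage hcont) hsub hd
      (fun ζ hζ => h0 _ hζ) (fun ζ hζ => h1 _ hζ)
    have hwB : w ∈ ball c R := ball_subset_ball (by linarith) hw
    have hgd : HasDerivAt g (deriv g w) (w + (R / 4 : ℝ) * 0) := by
      simpa using (hg.differentiableAt (isOpen_ball.mem_nhds hwB)).hasDerivAt
    have hh' : HasDerivAt h (deriv g w * ((R / 4 : ℝ) * 1)) 0 :=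
      hgd.comp 0 (((hasDerivAt_id (0 : ℂ)).const_mul ((R / 4 : ℝ) : ℂ)).const_add w)
    rw [hh'.deriv, mul_one, norm_mul, Complex.norm_real, Real.norm_of_nonneg (by positivity)] at key
    simp only [hh, mul_zero, add_zero] at key
    rw [div_mul_eq_mul_div, le_div_iff₀ hR]
    linarith
  have hseg : ∀ t ∈ Icc (0 : ℝ) 1, c + t * (z - c) ∈ ball c (R / 2) := fun t ht => by
    rw [mem_ball, dist_eq_norm] at *
    rw [add_sub_cancel_left, norm_mul, Complex.norm_real, Real.norm_of_nonneg ht.1]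
    exact (mul_le_of_le_one_left (norm_nonneg _) ht.2).trans_lt hz
  have := norm_sub_le_of_spherical_speed (γ := fun t => g (c + t * (z - c)))
    (γ' := fun t => deriv g (c + t * (z - c)) * (z - c)) (B := 1728 / R * ‖z - c‖)
    (fun t ht => by
      have hgd := (hg.differentiableAt (isOpen_ball.mem_nhds
        (ball_subset_ball (by linarith) (hseg t ht)))).hasDerivAt
      have hl : HasDerivAt (fun t : ℝ => c + (t : ℂ) * (z - c)) (1 * (z - c)) t :=
        ((hasDerivAt_id t).ofReal_comp.mul_const (z - c)).const_add c
      rw [one_mul] at hl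
      exact hgd.comp t hl)
    (fun t ht => by
      rw [norm_mul]
      calc _ ≤ (1728 / R * (1 + ‖g (c + t * (z - c))‖ ^ 2)) * ‖z - c‖ := by
            gcongr; exact hder _ (hseg t ht)
        _ = _ := by ring)
  simp only [Complex.ofReal_zero, zero_mul, add_zero, Complex.ofReal_one, one_mul,
    add_sub_cancel] at this
  calc _ ≤ _ := this
    _ = _ := by ring

/-- First homogeneous coordinate of a point of the Riemann sphere. -/
noncomputable def homNum (u : OnePoint ℂ) : ℂ := Option.casesOn u 1 (fun z => z)

/-- Second homogeneous coordinate of a point of the Riemann sphere. -/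
noncomputable def homDen (u : OnePoint ℂ) : ℂ := Option.casesOn u 0 (fun _ => 1)

@[simp] lemma homNum_coe (z : ℂ) : homNum (z : OnePoint ℂ) = z := rfl
@[simp] lemma homDen_coe (z : ℂ) : homDen (z : OnePoint ℂ) = 1 := rfl
@[simp] lemma homNum_infty : homNum ∞ = 1 := rfl
@[simp] lemma homDen_infty : homDen ∞ = 0 := rfl

/-- The determinant of the homogeneous coordinates of two points. -/
noncomputable def homDet (u v : OnePoint ℂ) : ℂ := homNum u * homDen v - homNum v * homDen u

/-- The Hermitian norm of the homogeneous coordinates of a point. -/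
noncomputable def homNorm (u : OnePoint ℂ) : ℝ := √(‖homNum u‖ ^ 2 + ‖homDen u‖ ^ 2)

lemma homDet_eq_zero_iff {u v : OnePoint ℂ} : homDet u v = 0 ↔ u = v := by
  induction u using OnePoint.rec <;> induction v using OnePoint.rec <;>
    simp [homDet, sub_eq_zero]

lemma homNorm_pos (u : OnePoint ℂ) : 0 < homNorm u := by
  induction u using OnePoint.rec
  · simp [homNorm]
  · simp only [homNorm, homNum_coe, homDen_coe, norm_one]; positivity

lemma chordalDist_eq (u v : OnePoint ℂ) :
    chordalDist u v = 2 * ‖homDet u v‖ / (homNorm u * homNorm v) := by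
  induction u using OnePoint.rec with
  | infty =>
    induction v using OnePoint.rec with
    | infty =>
      rw [show chordalDist ∞ ∞ = 0 from rfl]
      simp [homDet]
    | coe w =>
      rw [show chordalDist ∞ w = 2 / √(1 + ‖w‖ ^ 2) from rfl]
      simp [homDet, homNorm, add_comm]
  | coe z =>
    induction v using OnePoint.rec with
    | infty =>
      rw [show chordalDist z ∞ = 2 / √(1 + ‖z‖ ^ 2) from rfl]
      simp [homDet, homNorm, add_comm]
    | coe w =>
      rw [show chordalDist z w = 2 * dist z w / (√(1 + ‖z‖ ^ 2) * √(1 + ‖w‖ ^ 2)) from rfl]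
      simp [homDet, homNorm, add_comm, dist_eq_norm]

lemma norm_homDet_le (u v : OnePoint ℂ) : ‖homDet u v‖ ≤ homNorm u * homNorm v := by
  rw [homNorm, homNorm, ← Real.sqrt_mul (by positivity)]
  refine Real.le_sqrt_of_sq_le ?_
  have h : ‖homDet u v‖ ≤ ‖homNum u‖ * ‖homDen v‖ + ‖homNum v‖ * ‖homDen u‖ := by
    rw [← norm_mul, ← norm_mul]; exact norm_sub_le _ _
  calc ‖homDet u v‖ ^ 2 ≤ (‖homNum u‖ * ‖homDen v‖ + ‖homNum v‖ * ‖homDen u‖) ^ 2 := by gcongr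
    _ ≤ _ := by nlinarith [sq_nonneg (‖homNum u‖ * ‖homNum v‖ - ‖homDen v‖ * ‖homDen u‖)]

/-- The cross-ratio, i.e. the Möbius transformation sending `a, b, c` to `0, ∞, 1`. -/
noncomputable def crossRatio (a b c u : OnePoint ℂ) : ℂ :=
  (homDet u a * homDet c b) / (homDet u b * homDet c a)

lemma crossRatio_ne_zero {a b c u : OnePoint ℂ} (hua : u ≠ a) (hub : u ≠ b) (hca : c ≠ a)
    (hcb : c ≠ b) : crossRatio a b c u ≠ 0 := by
  simp [crossRatio, homDet_eq_zero_iff, *]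

lemma crossRatio_ne_one {a b c u : OnePoint ℂ} (hub : u ≠ b) (huc : u ≠ c) (hab : a ≠ b)
    (hca : c ≠ a) : crossRatio a b c u ≠ 1 := by
  intro h
  rw [crossRatio, div_eq_one_iff_eq (by simp [homDet_eq_zero_iff, *])] at h
  have : homDet u c * homDet a b = 0 := by
    simp only [homDet] at *
    linear_combination h
  simp [homDet_eq_zero_iff, *] at this

/-- The inverse of a Möbius transformation is Lipschitz for the chordal metric. -/
lemma exists_chordalDist_le_crossRatio {a b c : OnePoint ℂ} (hab : a ≠ b) (hca : c ≠ a)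
    (hcb : c ≠ b) : ∃ K : ℝ, 0 ≤ K ∧ ∀ u v, u ≠ b → v ≠ b →
      chordalDist u v ≤ K * (2 * dist (crossRatio a b c u) (crossRatio a b c v) /
        (√(1 + ‖crossRatio a b c u‖ ^ 2) * √(1 + ‖crossRatio a b c v‖ ^ 2))) := by
  set k₁ := homDet c b with hk₁
  set k₂ := homDet c a with hk₂
  set k := homDet a b with hk
  have h1 : k₁ ≠ 0 := by simpa [hk₁, homDet_eq_zero_iff]
  have h2 : k₂ ≠ 0 := by simpa [hk₂, homDet_eq_zero_iff]
  have h3 : k ≠ 0 := by simpa [hk, homDet_eq_zero_iff]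
  set M := ‖k₁‖ ^ 2 * homNorm a ^ 2 + ‖k₂‖ ^ 2 * homNorm b ^ 2 with hM
  have hMpos : 0 < M := by
    have := homNorm_pos a
    have := homNorm_pos b
    have := norm_pos_iff.2 h1
    have := norm_pos_iff.2 h2
    positivity
  set D := ‖k₁ * k₂ * k‖
  have hD : 0 < D := norm_pos_iff.2 (mul_ne_zero (mul_ne_zero h1 h2) h3)
  refine ⟨M / D, by positivity, fun u v hu hv => ?_⟩
  have key : ∀ u, u ≠ b → 1 ≤ √M * homNorm u / (‖homDet u b * k₂‖ * √(1 + ‖crossRatio a b c u‖ ^ 2)) := by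
    intro u hu
    have hub : homDet u b ≠ 0 := by simpa [homDet_eq_zero_iff]
    have hubk : 0 < ‖homDet u b * k₂‖ := norm_pos_iff.2 (mul_ne_zero hub h2)
    rw [le_div_iff₀ (by positivity), one_mul]
    refine le_of_sq_le_sq ?_ (by have := homNorm_pos u; positivity)
    rw [mul_pow, Real.sq_sqrt (by positivity), mul_pow, Real.sq_sqrt hMpos.le, crossRatio, ← hk₁,
      ← hk₂, norm_div, div_pow, mul_add, mul_one, mul_div_cancel₀ _ (pow_pos hubk 2).ne', norm_mul,
      norm_mul, mul_pow, mul_pow, hM]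
    have e1 := pow_le_pow_left₀ (norm_nonneg _) (norm_homDet_le u a) 2
    have e2 := pow_le_pow_left₀ (norm_nonneg _) (norm_homDet_le u b) 2
    have e1' := mul_le_mul_of_nonneg_left e1 (sq_nonneg ‖k₁‖)
    have e2' := mul_le_mul_of_nonneg_left e2 (sq_nonneg ‖k₂‖)
    nlinarith
  have hub : homDet u b ≠ 0 := by simpa [homDet_eq_zero_iff]
  have hvb : homDet v b ≠ 0 := by simpa [homDet_eq_zero_iff]
  have hdist : dist (crossRatio a b c u) (crossRatio a b c v)
      = D * ‖homDet u v‖ / (‖homDet u b * k₂‖ * ‖homDet v b * k₂‖) := by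
    rw [dist_eq_norm, crossRatio, crossRatio, ← hk₁, ← hk₂, div_sub_div _ _
      (mul_ne_zero hub h2) (mul_ne_zero hvb h2), norm_div, norm_mul (homDet u b * k₂)]
    congr 1
    rw [← norm_mul]
    congr 1
    simp only [hk, homDet]
    ring
  have hu' := key u hu
  have hv' := key v hv
  have hnu := homNorm_pos u
  have hnv := homNorm_pos v
  rw [chordalDist_eq, hdist]
  set su := √(1 + ‖crossRatio a b c u‖ ^ 2) with hsu
  set sv := √(1 + ‖crossRatio a b c v‖ ^ 2) with hsv
  have hsu0 : 0 < su := by positivity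
  have hsv0 : 0 < sv := by positivity
  calc 2 * ‖homDet u v‖ / (homNorm u * homNorm v)
      = 2 * ‖homDet u v‖ / (homNorm u * homNorm v) * (1 * 1) := by ring
    _ ≤ 2 * ‖homDet u v‖ / (homNorm u * homNorm v) *
        (√M * homNorm u / (‖homDet u b * k₂‖ * su) * (√M * homNorm v / (‖homDet v b * k₂‖ * sv))) := by
      gcongr
    _ = (√M) ^ 2 * (2 * ‖homDet u v‖ / ((‖homDet u b * k₂‖ * su) * (‖homDet v b * k₂‖ * sv))) := by
      field_simp
    _ = _ := by
      rw [Real.sq_sqrt hMpos.le]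
      field_simp

lemma chordalDist_coe_coe (z w : ℂ) : chordalDist z w =
    2 * dist z w / (√(1 + ‖z‖ ^ 2) * √(1 + ‖w‖ ^ 2)) := rfl

lemma chordalDist_infty_coe (w : ℂ) : chordalDist ∞ w = 2 / √(1 + ‖w‖ ^ 2) := rfl

lemma chordalDist_coe_infty (w : ℂ) : chordalDist w ∞ = 2 / √(1 + ‖w‖ ^ 2) := rfl

lemma eventually_chordalDist_lt (u : OnePoint ℂ) {δ : ℝ} (hδ : 0 < δ) :
    ∀ᶠ v in 𝓝 u, chordalDist u v < δ := by
  induction u using OnePoint.rec with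
  | infty =>
    rw [nhds_infty_eq, eventually_sup, eventually_map]
    refine ⟨?_, ?_⟩
    · rw [coclosedCompact_eq_cocompact, ← Metric.cobounded_eq_cocompact]
      filter_upwards [tendsto_norm_cobounded_atTop.eventually_gt_atTop (2 / δ)] with w hw
      rw [chordalDist_infty_coe, div_lt_comm₀ (by positivity) hδ]
      refine hw.trans_le (Real.le_sqrt_of_sq_le ?_)
      linarith
    · rw [eventually_pure]
      exact hδ
  | coe z =>
    rw [nhds_coe_eq, eventually_map]
    have hc : Continuous fun w : ℂ => chordalDist z w := by
      simp only [chordalDist_coe_coe]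
      exact Continuous.div (by fun_prop) (by fun_prop) (fun w => by positivity)
    refine hc.continuousAt.eventually_lt continuousAt_const ?_
    simpa [chordalDist_coe_coe] using hδ

lemma exists_chordalDist_lt_subset {u : OnePoint ℂ} {O : Set (OnePoint ℂ)} (hO : O ∈ 𝓝 u) :
    ∃ δ > 0, ∀ v, chordalDist u v < δ → v ∈ O := by
  induction u using OnePoint.rec with
  | infty =>
    rw [nhds_infty_eq, mem_sup, mem_map, coclosedCompact_eq_cocompact,
      ← Metric.cobounded_eq_cocompact] at hO
    obtain ⟨R, -, hR⟩ := (hasBasis_cobounded_norm (E := ℂ)).mem_iff.1 hO.1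
    refine ⟨2 / √(1 + R ^ 2), by positivity, fun v hv => ?_⟩
    induction v using OnePoint.rec with
    | infty => exact hO.2
    | coe w =>
      refine hR (show R ≤ ‖w‖ from ?_)
      rw [chordalDist_infty_coe, div_lt_div_iff_of_pos_left (by norm_num) (by positivity)
        (by positivity), Real.sqrt_lt_sqrt_iff (by positivity)] at hv
      exact (le_abs_self R).trans (abs_le_of_sq_le_sq (by linarith) (norm_nonneg _))
  | coe z =>
    rw [nhds_coe_eq, mem_map] at hO
    obtain ⟨ε, hε, hO⟩ := Metric.mem_nhds_iff.1 hO
    have hz : 0 < √(1 + ‖z‖ ^ 2) := by positivity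
    refine ⟨min (2 / √(1 + ‖z‖ ^ 2)) (2 / (√(1 + ‖z‖ ^ 2) * ((1 + ‖z‖) / ε + 1))), by positivity,
      fun v hv => ?_⟩
    induction v using OnePoint.rec with
    | infty =>
      rw [chordalDist_coe_infty] at hv
      exact absurd (hv.trans_le (min_le_left _ _)) (lt_irrefl _)
    | coe w =>
      refine hO (show w ∈ ball z ε from ?_)
      rw [mem_ball, dist_comm]
      by_contra! h
      refine absurd (hv.trans_le (min_le_right _ _)) (not_lt.2 ?_)
      rw [chordalDist_coe_coe, div_le_div_iff₀ (by positivity) (by positivity)]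
      have hw : √(1 + ‖w‖ ^ 2) ≤ 1 + ‖w‖ := by
        rw [Real.sqrt_le_left (by positivity)]
        nlinarith [norm_nonneg w]
      have hw2 : ‖w‖ ≤ ‖z‖ + dist z w := by
        rw [dist_eq_norm]
        linarith [norm_sub_norm_le w z, norm_sub_rev z w]
      have hd : 1 + ‖z‖ ≤ dist z w * ((1 + ‖z‖) / ε) := by
        rw [mul_div_assoc', le_div_iff₀ hε, mul_comm]
        gcongr
      have : √(1 + ‖w‖ ^ 2) ≤ dist z w * ((1 + ‖z‖) / ε + 1) := by linarith
      calc 2 * (√(1 + ‖z‖ ^ 2) * √(1 + ‖w‖ ^ 2))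
          ≤ 2 * (√(1 + ‖z‖ ^ 2) * (dist z w * ((1 + ‖z‖) / ε + 1))) := by gcongr
        _ = _ := by ring

lemma sphereInv_coe_zero : sphereInv ((0 : ℂ) : OnePoint ℂ) = (∞ : OnePoint ℂ) := if_pos rfl

lemma sphereInv_coe {z : ℂ} (hz : z ≠ 0) : sphereInv (z : OnePoint ℂ) = (z⁻¹ : ℂ) := if_neg hz

lemma sphereInv_infty : sphereInv ∞ = (0 : ℂ) := rfl

lemma sphereInv_sphereInv (u : OnePoint ℂ) : sphereInv (sphereInv u) = u := by
  induction u using OnePoint.rec with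
  | infty => rw [sphereInv_infty, sphereInv_coe_zero]
  | coe z =>
    by_cases hz : z = 0
    · rw [hz, sphereInv_coe_zero, sphereInv_infty]
    · rw [sphereInv_coe hz, sphereInv_coe (inv_ne_zero hz), inv_inv]

lemma finPart_coe (z : ℂ) : finPart (z : OnePoint ℂ) = z := rfl

lemma sphereChart_infty (u : OnePoint ℂ) : sphereChart ∞ u = finPart (sphereInv u) := rfl

lemma sphereParam_infty (x : ℂ) : sphereParam ∞ x = sphereInv x := rfl

lemma sphereParam_coe (z x : ℂ) : sphereParam z x = x := rfl

lemma sphereCoord_infty : sphereCoord ∞ = 0 := rfl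

lemma sphereCoord_coe (z : ℂ) : sphereCoord z = z := rfl

lemma sphereChart_sphereParam (u : OnePoint ℂ) (x : ℂ) :
    sphereChart u (sphereParam u x) = x := by
  induction u using OnePoint.rec with
  | infty => rw [sphereParam_infty, sphereChart_infty, sphereInv_sphereInv, finPart_coe]
  | coe z => rfl

lemma sphereParam_sphereCoord (u : OnePoint ℂ) : sphereParam u (sphereCoord u) = u := by
  induction u using OnePoint.rec with
  | infty => rw [sphereCoord_infty, sphereParam_infty, sphereInv_coe_zero]
  | coe z => rfl

lemma sphereChart_self (u : OnePoint ℂ) : sphereChart u u = sphereCoord u := by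
  conv_lhs => rw [← sphereParam_sphereCoord u]
  induction u using OnePoint.rec with
  | infty => rw [sphereParam_sphereCoord, sphereChart_infty]; rfl
  | coe z => rfl

lemma eventually_sphereParam_sphereChart (u : OnePoint ℂ) :
    ∀ᶠ v in 𝓝 u, sphereParam u (sphereChart u v) = v := by
  induction u using OnePoint.rec with
  | infty =>
    have h : ∀ᶠ v in 𝓝 (∞ : OnePoint ℂ), v ≠ ((0 : ℂ) : OnePoint ℂ) :=
      isOpen_compl_singleton.mem_nhds (infty_ne_coe 0)
    filter_upwards [h] with v hv
    induction v using OnePoint.rec with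
    | infty =>
      rw [sphereChart_infty, sphereInv_infty, finPart_coe, sphereParam_infty, sphereInv_coe_zero]
    | coe w =>
      have hw : w ≠ 0 := fun h => hv (by rw [h])
      rw [sphereChart_infty, sphereInv_coe hw, finPart_coe, sphereParam_infty,
        sphereInv_coe (inv_ne_zero hw), inv_inv]
  | coe z =>
    have h : ∀ᶠ v in 𝓝 (z : OnePoint ℂ), v ≠ (∞ : OnePoint ℂ) :=
      isOpen_compl_singleton.mem_nhds (coe_ne_infty z)
    filter_upwards [h] with v hv
    induction v using OnePoint.rec with
    | infty => exact absurd rfl hv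
    | coe w => rfl

lemma continuousAt_sphereChart (u : OnePoint ℂ) : ContinuousAt (sphereChart u) u := by
  induction u using OnePoint.rec with
  | infty =>
    rw [continuousAt_infty', coclosedCompact_eq_cocompact, ← Metric.cobounded_eq_cocompact,
      sphereChart_self, sphereCoord_infty]
    refine (tendsto_inv₀_cobounded (α := ℂ)).congr' ?_
    filter_upwards [(hasBasis_cobounded_norm (E := ℂ)).mem_of_mem (i := 1) trivial] with w hw
    have hw0 : w ≠ 0 := norm_pos_iff.1 (lt_of_lt_of_le one_pos hw)
    show _ = sphereChart ∞ (w : OnePoint ℂ)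
    rw [sphereChart_infty, sphereInv_coe hw0, finPart_coe]
  | coe z =>
    rw [continuousAt_coe]
    exact continuousAt_id

lemma continuousAt_sphereParam (u : OnePoint ℂ) :
    ContinuousAt (sphereParam u) (sphereCoord u) := by
  induction u using OnePoint.rec with
  | infty =>
    rw [sphereCoord_infty, continuousAt_iff_punctured_nhds, sphereParam_infty, sphereInv_coe_zero]
    have h : Tendsto (fun w : ℂ => (w : OnePoint ℂ)) (Bornology.cobounded ℂ) (𝓝 ∞) := by
      rw [Metric.cobounded_eq_cocompact, ← coclosedCompact_eq_cocompact]
      exact tendsto_coe_infty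
    refine (h.comp (tendsto_inv₀_nhdsNE_zero (α := ℂ))).congr' ?_
    filter_upwards [self_mem_nhdsWithin] with w hw
    rw [sphereParam_infty, sphereInv_coe hw]
    rfl
  | coe z => exact continuous_coe.continuousAt

lemma analyticAt_crossRatio_sphereParam {a b c u : OnePoint ℂ} (hub : u ≠ b) (hca : c ≠ a) :
    AnalyticAt ℂ (fun x => crossRatio a b c (sphereParam u x)) (sphereCoord u) := by
  have h2 : homDet c a ≠ 0 := by simpa [homDet_eq_zero_iff]
  have hb : homDet u b ≠ 0 := by simpa [homDet_eq_zero_iff]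
  induction u using OnePoint.rec with
  | infty =>
    have h : ∀ x : ℂ, crossRatio a b c (sphereParam ∞ x) =
        ((homDen a - homNum a * x) * homDet c b) / ((homDen b - homNum b * x) * homDet c a) := by
      intro x
      by_cases hx : x = 0
      · rw [hx, sphereParam_infty, sphereInv_coe_zero]
        simp [crossRatio, homDet]
      · rw [sphereParam_infty, sphereInv_coe hx, crossRatio]
        have e : ∀ v, homDet ((x⁻¹ : ℂ) : OnePoint ℂ) v = x⁻¹ * (homDen v - homNum v * x) := by
          intro v
          simp only [homDet, homNum_coe, homDen_coe]
          field_simp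
        rw [e, e, mul_assoc, mul_assoc, mul_div_mul_left _ _ (inv_ne_zero hx)]
    simp only [h]
    refine AnalyticAt.div (by fun_prop) (by fun_prop) (mul_ne_zero ?_ h2)
    simpa [homDet, sphereCoord_infty] using hb
  | coe z =>
    simp only [sphereParam_coe, crossRatio, homDet, homNum_coe, homDen_coe, sphereCoord_coe] at *
    exact AnalyticAt.div (by fun_prop) (by fun_prop) (mul_ne_zero hb h2)

lemma SphereMeroAt.eventually_sphereParam {h : ℂ → OnePoint ℂ} {z : ℂ} (hh : ContinuousAt h z) :
    ∀ᶠ x in 𝓝 z, sphereParam (h z) (sphereChart (h z) (h x)) = h x :=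
  hh.eventually (eventually_sphereParam_sphereChart (h z))

lemma SphereMeroAt.crossRatio_comp {h : ℂ → OnePoint ℂ} {z : ℂ} (hh : SphereMeroAt h z)
    {a b c : OnePoint ℂ} (hb : h z ≠ b) (hca : c ≠ a) :
    AnalyticAt ℂ (fun x => crossRatio a b c (h x)) z := by
  have h1 := analyticAt_crossRatio_sphereParam hb hca
  rw [← sphereChart_self] at h1
  refine (h1.comp_of_eq hh.2 rfl).congr ?_
  filter_upwards [SphereMeroAt.eventually_sphereParam hh.1] with x hx
  simp only [Function.comp_apply, hx]

lemma SphereAnalyticAt.comp_mero {F : OnePoint ℂ → OnePoint ℂ} {ψ : ℂ → OnePoint ℂ} {z : ℂ}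
    (hF : SphereAnalyticAt F (ψ z)) (hψ : SphereMeroAt ψ z) :
    SphereMeroAt (fun x => F (ψ x)) z := by
  refine ⟨hF.1.comp hψ.1, ?_⟩
  have h1 := hF.2
  rw [← sphereChart_self] at h1
  refine (h1.comp_of_eq hψ.2 rfl).congr ?_
  filter_upwards [SphereMeroAt.eventually_sphereParam hψ.1] with x hx
  simp only [Function.comp_apply, hx]

lemma SphereMeroAt.comp_analytic {h : ℂ → OnePoint ℂ} {M : ℂ → ℂ} {z : ℂ}
    (hh : SphereMeroAt h (M z)) (hM : AnalyticAt ℂ M z) : SphereMeroAt (fun x => h (M x)) z :=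
  ⟨ContinuousAt.comp (f := M) hh.1 hM.continuousAt, hh.2.comp hM⟩

/-- A continuous solution `y` of `f ∘ y = g` with `f` holomorphic and locally injective and `g`
holomorphic is holomorphic. -/
lemma analyticAt_of_comp_injOn {f y : ℂ → ℂ} {z₀ : ℂ} {B : Set ℂ} (hf : AnalyticAt ℂ f (y z₀))
    (hB : B ∈ 𝓝 (y z₀)) (hinj : InjOn f B) (hy : ContinuousAt y z₀)
    (hfy : AnalyticAt ℂ (fun z => f (y z)) z₀) : AnalyticAt ℂ y z₀ := by
  set x₀ := y z₀
  have hnc : ∀ w ∈ interior B, ¬ ∀ᶠ z in 𝓝 w, f z = f w := by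
    intro w hw h
    have h2 : ∀ᶠ z in 𝓝 w, z = w := by
      filter_upwards [h, isOpen_interior.mem_nhds hw] with z hz hzB
      exact hinj (interior_subset hzB) (interior_subset hw) hz
    refine not_isOpen_singleton w (isOpen_singleton_iff_nhds_eq_pure w |>.2 ?_)
    exact le_antisymm (le_pure_iff.2 h2) (pure_le_nhds w)
  have hx₀ : x₀ ∈ interior B := mem_interior_iff_mem_nhds.2 hB
  have hder : ∀ᶠ w in 𝓝[≠] x₀, deriv f w ≠ 0 := by
    rcases hf.deriv.eventually_eq_zero_or_eventually_ne_zero with h | h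
    · exfalso
      refine hnc x₀ hx₀ ?_
      obtain ⟨r, hr, hrs⟩ := Metric.eventually_nhds_iff_ball.1 (h.and hf.eventually_analyticAt)
      filter_upwards [ball_mem_nhds x₀ hr] with z hz
      exact (isOpen_ball.is_const_of_deriv_eq_zero (convex_ball x₀ r).isPreconnected
        (fun w hw => (hrs w hw).2.differentiableAt.differentiableWithinAt)
        (fun w hw => (hrs w hw).1) hz (mem_ball_self hr))
    · exact h
  rw [eventually_nhdsWithin_iff] at hder
  obtain ⟨r, hr, hrs⟩ := Metric.eventually_nhds_iff_ball.1
    ((hder.and hf.eventually_analyticAt).and (isOpen_interior.mem_nhds hx₀))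
  set D := ball x₀ r
  have hDB : D ⊆ B := fun w hw => interior_subset (hrs w hw).2
  have hDinj : InjOn f D := hinj.mono hDB
  set s := Function.invFunOn f D
  have hsf : ∀ w ∈ D, s (f w) = w := fun w hw => hDinj.leftInvOn_invFunOn hw
  have hmap : ∀ w ∈ D, 𝓝 (f w) ≤ map f (𝓝 w) := fun w hw =>
    ((hrs w hw).1.2.eventually_constant_or_nhds_le_map_nhds).resolve_left (hnc w (hrs w hw).2)
  have hfs : ∀ w ∈ D, ∀ᶠ p in 𝓝 (f w), p ∈ f '' D := fun w hw =>
    hmap w hw <| mem_map.2 (mem_of_superset (isOpen_ball.mem_nhds hw) fun z hz => mem_image_of_mem f hz)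
  have hcont : ∀ w ∈ D, ContinuousAt s (f w) := by
    intro w hw
    rw [ContinuousAt, hsf w hw]
    refine Tendsto.mono_left ?_ (hmap w hw)
    rw [tendsto_map'_iff]
    refine tendsto_id.congr' ?_
    filter_upwards [isOpen_ball.mem_nhds hw] with p hp
    exact (hsf p hp).symm
  have hdiff : ∀ w ∈ D, w ≠ x₀ → DifferentiableAt ℂ s (f w) := by
    intro w hw hwx
    refine (HasDerivAt.of_local_left_inverse (f := f) (f' := deriv f w) (hcont w hw) ?_
      ((hrs w hw).1.1 hwx) ?_).differentiableAt
    · rw [hsf w hw]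
      exact (hrs w hw).1.2.differentiableAt.hasDerivAt
    · filter_upwards [hfs w hw] with p hp
      exact Function.invFunOn_eq hp
  have hxD : x₀ ∈ D := mem_ball_self hr
  have hs : AnalyticAt ℂ s (f x₀) := by
    refine Complex.analyticAt_of_differentiable_on_punctured_nhds_of_continuousAt ?_ (hcont x₀ hxD)
    rw [eventually_nhdsWithin_iff]
    filter_upwards [hfs x₀ hxD] with p hp hpx
    obtain ⟨w, hw, rfl⟩ := hp
    exact hdiff w hw (fun h => hpx (by rw [h]; rfl))
  refine (hs.comp_of_eq hfy rfl).congr ?_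
  filter_upwards [hy.eventually (isOpen_ball.mem_nhds hxD)] with z hz
  exact hsf _ hz

lemma injOn_chart_comp {h : ℂ → OnePoint ℂ} {x₀ : ℂ} (hh : ContinuousAt h x₀) {B : Set ℂ}
    (hB : B ∈ 𝓝 x₀) (hinj : InjOn h B) :
    ∃ B' ∈ 𝓝 x₀, InjOn (fun x => sphereChart (h x₀) (h x)) B' := by
  refine ⟨B ∩ {x | sphereParam (h x₀) (sphereChart (h x₀) (h x)) = h x},
    inter_mem hB (SphereMeroAt.eventually_sphereParam hh), fun x hx y hy hxy => ?_⟩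
  refine hinj hx.1 hy.1 ?_
  rw [← hx.2, ← hy.2]
  exact congrArg _ hxy

lemma SphereAnalyticAt.mero_of_comp {F : OnePoint ℂ → OnePoint ℂ} {ψ : ℂ → OnePoint ℂ} {z : ℂ}
    (hF : SphereAnalyticAt F (ψ z)) {N : Set (OnePoint ℂ)} (hN : N ∈ 𝓝 (ψ z)) (hinj : InjOn F N)
    (hψ : ContinuousAt ψ z) (hFψ : SphereMeroAt (fun x => F (ψ x)) z) : SphereMeroAt ψ z := by
  refine ⟨hψ, ?_⟩
  set u := ψ z with hu
  have hp := continuousAt_sphereParam u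
  have hp' : ContinuousAt (fun x => F (sphereParam u x)) (sphereCoord u) :=
    ContinuousAt.comp (by rw [sphereParam_sphereCoord]; exact hF.1) hp
  have hpN : sphereParam u ⁻¹' N ∈ 𝓝 (sphereCoord u) :=
    hp.preimage_mem_nhds (by rwa [sphereParam_sphereCoord])
  have hI : InjOn (fun x => F (sphereParam u x)) (sphereParam u ⁻¹' N) := by
    intro x hx y hy hxy
    have := hinj hx hy hxy
    rw [← sphereChart_sphereParam u x, this, sphereChart_sphereParam]
  obtain ⟨B, hB, hBi⟩ := injOn_chart_comp hp' hpN hI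
  simp only [sphereParam_sphereCoord] at hBi
  refine analyticAt_of_comp_injOn (B := B) (f := fun x => sphereChart (F u) (F (sphereParam u x)))
    ?_ ?_ hBi ?_ ?_
  · simp only [← hu, sphereChart_self]; exact hF.2
  · simp only [← hu, sphereChart_self]; exact hB
  · exact ContinuousAt.comp (g := sphereChart u) (continuousAt_sphereChart u) hψ
  · refine hFψ.2.congr ?_
    filter_upwards [SphereMeroAt.eventually_sphereParam hψ] with x hx
    simp only [← hu] at hx ⊢
    rw [hx]

lemma SphereMeroAt.analyticAt_of_comp {π : ℂ → OnePoint ℂ} {y : ℂ → ℂ} {z : ℂ}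
    (hπ : SphereMeroAt π (y z)) {N : Set ℂ} (hN : N ∈ 𝓝 (y z)) (hinj : InjOn π N)
    (hy : ContinuousAt y z) (hπy : SphereMeroAt (fun x => π (y x)) z) : AnalyticAt ℂ y z := by
  obtain ⟨B, hB, hBi⟩ := injOn_chart_comp hπ.1 hN hinj
  exact analyticAt_of_comp_injOn hπ.2 hB hBi hy hπy.2

lemma exists_tendstoLocallyUniformlyOn_ultrafilter (l : Ultrafilter ℕ) {g : ℕ → ℂ → ℂ}
    (hg : ∀ n, DifferentiableOn ℂ (g n) (ball 0 1))
    (hm : ∀ n, MapsTo (g n) (ball 0 1) (ball 0 1)) :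
    ∃ G : ℂ → ℂ, TendstoLocallyUniformlyOn g G l (ball 0 1) ∧
      MapsTo G (ball 0 1) (closedBall 0 1) := by
  have hlim : ∀ z ∈ ball (0 : ℂ) 1, ∃ y ∈ closedBall (0 : ℂ) 1,
      Tendsto (fun n => g n z) l (𝓝 y) := fun z hz =>
    (isCompact_closedBall (0 : ℂ) 1).ultrafilter_le_nhds (l.map fun n => g n z) (by
      rw [le_principal_iff]
      exact Filter.mem_map.2 (univ_mem' fun n => ball_subset_closedBall (hm n hz)))
  choose! G hG1 hG2 using hlim
  refine ⟨G, ?_, hG1⟩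
  rw [Metric.tendstoLocallyUniformlyOn_iff]
  intro ε hε x hx
  set R := 1 - ‖x‖ with hR
  have hx1 : ‖x‖ < 1 := by simpa using hx
  have hR0 : 0 < R := by linarith
  have hsub : ball x R ⊆ ball (0 : ℂ) 1 := by
    refine ball_subset_ball' ?_
    rw [dist_zero_right]; linarith
  have hlip : ∀ n, ∀ y ∈ ball x R, dist (g n y) (g n x) ≤ 2 / R * dist y x := fun n y hy => by
    refine Complex.dist_le_div_mul_dist_of_mapsTo_ball ((hg n).mono hsub) (fun z hz => ?_) hy
    have h1 : ‖g n z‖ < 1 := by simpa using hm n (hsub hz)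
    have h2 : ‖g n x‖ < 1 := by simpa using hm n hx
    rw [mem_closedBall, dist_eq_norm]
    linarith [norm_sub_le (g n z) (g n x)]
  have hlipG : ∀ y ∈ ball x R, dist (G y) (G x) ≤ 2 / R * dist y x := fun y hy =>
    le_of_tendsto ((hG2 y (hsub hy)).dist (hG2 x hx)) (Eventually.of_forall fun n => hlip n y hy)
  set ρ := min R (R * ε / 8)
  have hρ : 0 < ρ := by positivity
  refine ⟨ball x ρ, mem_nhdsWithin_of_mem_nhds (ball_mem_nhds x hρ), ?_⟩
  filter_upwards [(Metric.tendsto_nhds.1 (hG2 x hx)) (ε / 2) (by linarith)] with n hn y hy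
  have hyR : y ∈ ball x R := ball_subset_ball (min_le_left _ _) hy
  have hb : 2 / R * dist y x ≤ ε / 4 := by
    have : dist y x ≤ R * ε / 8 := (le_of_lt hy).trans (min_le_right _ _)
    rw [div_mul_eq_mul_div, div_le_iff₀ hR0]
    linarith
  have h1 := hlip n y hyR
  have h2 := hlipG y hyR
  have h3 := dist_triangle4 (G y) (G x) (g n x) (g n y)
  rw [dist_comm (G x) (g n x), dist_comm (g n x) (g n y)] at h3
  linarith

/-- A normal family argument combined with Hurwitz' theorem for self-maps of the disc. -/
lemma exists_ball_subset_image_of_selfMaps (l : Ultrafilter ℕ) {g : ℕ → ℂ → ℂ} {b : ℕ → ℂ}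
    {a : ℂ} {r : ℝ} (hg : ∀ n, DifferentiableOn ℂ (g n) (ball 0 1))
    (hm : ∀ n, MapsTo (g n) (ball 0 1) (ball 0 1)) (h0 : ∀ n, g n 0 = a) (hr : r < 1)
    (hb : ∀ n, ‖b n‖ ≤ r) :
    ∃ p ∈ ball (0 : ℂ) 1, Tendsto (fun n => g n (b n)) l (𝓝 p) ∧
      (p ≠ a → ∃ ε > 0, ball p ε ⊆ ball 0 1 ∧ ∀ᶠ n in (l : Filter ℕ),
        ball p ε ⊆ g n '' ball 0 1) := by
  obtain ⟨G, hloc, hGm⟩ := exists_tendstoLocallyUniformlyOn_ultrafilter l hg hm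
  have h0mem : (0 : ℂ) ∈ ball (0 : ℂ) 1 := mem_ball_self one_pos
  have ha : ‖a‖ < 1 := by simpa [h0] using hm 0 h0mem
  have hGd : DifferentiableOn ℂ G (ball 0 1) :=
    hloc.differentiableOn (Eventually.of_forall hg) isOpen_ball
  have hG0 : G 0 = a := by
    refine tendsto_nhds_unique (hloc.tendsto_at h0mem) ?_
    simp only [h0]
    exact tendsto_const_nhds
  have hpre : IsPreconnected (ball (0 : ℂ) 1) := (convex_ball 0 1).isPreconnected
  have hGball : MapsTo G (ball 0 1) (ball 0 1) := by
    intro z hz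
    rw [mem_ball, dist_zero_right]
    refine lt_of_le_of_ne (by simpa using hGm hz) fun h => ?_
    have := Complex.norm_eqOn_of_isPreconnected_of_isMaxOn hpre isOpen_ball hGd hz
      (fun w hw => by
        show ‖G w‖ ≤ ‖G z‖
        rw [h]; simpa using hGm hw) h0mem
    simp only [Function.comp_apply, Function.const_apply, hG0, h] at this
    linarith
  obtain ⟨b', hb', hbl⟩ := (isCompact_closedBall (0 : ℂ) r).ultrafilter_le_nhds (l.map b) (by
    rw [le_principal_iff]
    exact Filter.mem_map.2 (univ_mem' fun n => by
      show b n ∈ closedBall 0 r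
      simpa using hb n))
  have hball : closedBall (0 : ℂ) r ⊆ ball 0 1 := closedBall_subset_ball hr
  have hb1 : b' ∈ ball (0 : ℂ) 1 := hball hb'
  have hGan : AnalyticOnNhd ℂ G (ball 0 1) := hGd.analyticOnNhd isOpen_ball
  refine ⟨G b', hGball hb1, hloc.tendsto_comp (hGd.continuousOn b' hb1) hb1
    (tendsto_nhdsWithin_iff.2 ⟨hbl, Eventually.of_forall fun n => hball (by simpa using hb n)⟩),
    fun hpa => ?_⟩
  have hne : ∀ᶠ z in 𝓝[≠] b', G z ≠ G b' := by
    rcases (hGan b' hb1).eventually_eq_or_eventually_ne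
      (analyticAt_const (v := G b')) with h | h
    · exact absurd (hG0 ▸ hGan.eqOn_of_preconnected_of_eventuallyEq analyticOnNhd_const hpre hb1 h
        h0mem) (Ne.symm hpa)
    · exact h
  rw [eventually_nhdsWithin_iff] at hne
  obtain ⟨ρ, hρ, hρs⟩ := Metric.nhds_basis_closedBall.eventually_iff.1
    (hne.and (isOpen_ball.mem_nhds hb1))
  have hsubρ : closedBall b' ρ ⊆ ball 0 1 := fun z hz => (hρs hz).2
  obtain ⟨z₁, hz₁, hmin⟩ := (isCompact_sphere b' ρ).exists_isMinOn
    (NormedSpace.sphere_nonempty.2 hρ.le) (f := fun z => ‖G z - G b'‖)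
    (((hGd.continuousOn.mono hsubρ).mono sphere_subset_closedBall).sub continuousOn_const).norm
  set η := ‖G z₁ - G b'‖ / 4 with hη
  have hη0 : 0 < η := by
    have : G z₁ ≠ G b' := (hρs (sphere_subset_closedBall hz₁)).1 fun h => by
      rw [mem_singleton_iff] at h
      rw [h, mem_sphere, dist_self] at hz₁
      exact hρ.ne hz₁
    have := norm_pos_iff.2 (sub_ne_zero.2 this)
    positivity
  obtain ⟨ε₁, hε₁, hε₁s⟩ := Metric.mem_nhds_iff.1 (isOpen_ball.mem_nhds (hGball hb1))
  have hunif := (tendstoLocallyUniformlyOn_iff_forall_isCompact isOpen_ball).1 hloc _ hsubρ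
    (isCompact_closedBall b' ρ)
  refine ⟨min ε₁ (η / 2), by positivity, (ball_subset_ball (min_le_left _ _)).trans hε₁s, ?_⟩
  filter_upwards [Metric.tendstoUniformlyOn_iff.1 hunif (η / 2) (by linarith)] with n hn
  have hbn := hn b' (mem_closedBall_self hρ.le)
  have hsph : ∀ z ∈ sphere b' ρ, 2 * η ≤ ‖g n z - g n b'‖ := by
    intro z hz
    have h1 := hn z (sphere_subset_closedBall hz)
    have h2 : ‖G z₁ - G b'‖ ≤ ‖G z - G b'‖ := hmin hz
    rw [← dist_eq_norm, ← dist_eq_norm] at h2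
    rw [← dist_eq_norm] at hη ⊢
    have h3 := dist_triangle4 (G z) (g n z) (g n b') (G b')
    rw [dist_comm (g n b') (G b')] at h3
    linarith
  have hsub := DiffContOnCl.ball_subset_image_closedBall
    (((hg n).mono hsubρ).diffContOnCl_ball subset_rfl) hρ hsph (by
      intro hcon
      have hcon' : g n =ᶠ[𝓝 b'] fun _ => g n b' := hcon.mono fun z hz => not_not.1 hz
      have := ((hg n).analyticOnNhd isOpen_ball).eqOn_of_preconnected_of_eventuallyEq
        analyticOnNhd_const hpre hb1 hcon' (hsubρ (sphere_subset_closedBall hz₁))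
      have h2 := hsph z₁ hz₁
      simp only at this
      rw [this, sub_self, norm_zero] at h2
      linarith)
  refine Subset.trans ?_ (hsub.trans (image_mono hsubρ))
  refine ball_subset_ball' ?_
  have := min_le_right ε₁ (η / 2)
  linarith

section Covering

variable {X Y : Type*} [TopologicalSpace X] [TopologicalSpace Y] {f : X → Y} {A : Set X} {B : Set Y}

lemma exists_injOn_nhds_of_isCoveringMap_restrict {h : MapsTo f A B}
    (hc : IsCoveringMap (MapsTo.restrict f A B h)) (hA : IsOpen A) {a : X} (ha : a ∈ A) :
    ∃ N ∈ 𝓝 a, InjOn f N := by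
  obtain ⟨W, hW, haW, hinj⟩ := hc.isLocalHomeomorph.isLocallyInjective ⟨a, ha⟩
  refine ⟨Subtype.val '' W, (hA.isOpenMap_subtype_val W hW).mem_nhds ⟨_, haW, rfl⟩, ?_⟩
  rintro _ ⟨x, hx, rfl⟩ _ ⟨y, hy, rfl⟩ hxy
  exact congrArg _ (hinj hx hy (Subtype.ext hxy))

lemma nhds_le_map_of_isCoveringMap_restrict {h : MapsTo f A B}
    (hc : IsCoveringMap (MapsTo.restrict f A B h)) (hB : IsOpen B) {a : X} (ha : a ∈ A) :
    𝓝 (f a) ≤ map f (𝓝 a) := by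
  have h1 := hc.isOpenMap.nhds_le ⟨a, ha⟩
  have h2 : map Subtype.val (𝓝 (⟨f a, h ha⟩ : B)) = 𝓝 (f a) :=
    map_nhds_subtype_coe_eq_nhds (h ha) (hB.mem_nhds (h ha))
  rw [← h2]
  refine (map_mono h1).trans ?_
  rw [Filter.map_map]
  have h3 : (Subtype.val ∘ MapsTo.restrict f A B h) = f ∘ Subtype.val := rfl
  rw [h3, ← Filter.map_map]
  exact map_mono continuous_subtype_val.continuousAt

lemma exists_lift_of_isCoveringMap_restrict {h : MapsTo f A B}
    (hc : IsCoveringMap (MapsTo.restrict f A B h)) {φ : ℂ → Y}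
    (hφ : ContinuousOn φ (ball 0 1)) (hφB : MapsTo φ (ball 0 1) B) {a : X} (ha : a ∈ A)
    (hfa : f a = φ 0) :
    ∃ ψ : ℂ → X, ContinuousOn ψ (ball 0 1) ∧ MapsTo ψ (ball 0 1) A ∧ ψ 0 = a ∧
      ∀ z ∈ ball 0 1, f (ψ z) = φ z := by
  have h0 : (0 : ℂ) ∈ ball (0 : ℂ) 1 := mem_ball_self one_pos
  have : LocallyPathConnectedSpace (ball (0 : ℂ) 1) := isOpen_ball.locallyPathConnectedSpace
  have : ContractibleSpace (ball (0 : ℂ) 1) := (convex_ball (0 : ℂ) 1).contractibleSpace ⟨0, h0⟩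
  obtain ⟨L, ⟨hL0, hL⟩, -⟩ := hc.existsUnique_continuousMap_lifts
    ⟨MapsTo.restrict φ _ _ hφB, hφ.mapsToRestrict hφB⟩ ⟨0, h0⟩ ⟨a, ha⟩ (Subtype.ext hfa)
  classical
  refine ⟨fun z => if hz : z ∈ ball (0 : ℂ) 1 then (L ⟨z, hz⟩ : X) else a, ?_, ?_, ?_, ?_⟩
  · rw [continuousOn_iff_continuous_domRestrict]
    refine (continuous_subtype_val.comp L.continuous).congr fun z => ?_
    simp only [Set.domRestrict_apply, dif_pos z.2, Function.comp_apply]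
  · intro z hz
    simp only [dif_pos hz]
    exact (L ⟨z, hz⟩).2
  · simp only [dif_pos h0, hL0]
  · intro z hz
    simp only [dif_pos hz]
    exact congrArg Subtype.val (congrFun hL ⟨z, hz⟩)

end Covering

/-- A non-degenerate meromorphic map is open. -/
lemma SphereMeroAt.nhds_le_map {h : ℂ → OnePoint ℂ} {z : ℂ} (hh : SphereMeroAt h z) {N : Set ℂ}
    (hN : N ∈ 𝓝 z) (hinj : InjOn h N) : 𝓝 (h z) ≤ map h (𝓝 z) := by
  obtain ⟨B, hB, hBi⟩ := injOn_chart_comp hh.1 hN hinj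
  have h1 := hh.2.eventually_constant_or_nhds_le_map_nhds.resolve_left fun hc => by
    have h2 : ∀ᶠ x in 𝓝 z, x = z := by
      filter_upwards [hc, hB] with x hx hxB
      exact hBi hxB (mem_of_mem_nhds hB) hx
    refine not_isOpen_singleton z (isOpen_singleton_iff_nhds_eq_pure z |>.2 ?_)
    exact le_antisymm (le_pure_iff.2 h2) (pure_le_nhds z)
  have h2 : map h (𝓝 z) = map (sphereParam (h z)) (map (fun x => sphereChart (h z) (h x)) (𝓝 z)) := by
    rw [Filter.map_map]
    refine Filter.map_congr ?_
    filter_upwards [SphereMeroAt.eventually_sphereParam hh.1] with x hx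
    exact hx.symm
  have h3 : 𝓝 (h z) = map (sphereParam (h z)) (map (sphereChart (h z)) (𝓝 (h z))) := by
    rw [Filter.map_map]
    conv_lhs => rw [← Filter.map_id (f := 𝓝 (h z))]
    refine Filter.map_congr ?_
    filter_upwards [eventually_sphereParam_sphereChart (h z)] with v hv
    exact hv.symm
  rw [h2, h3]
  exact map_mono (le_trans (continuousAt_sphereChart (h z)) h1)

lemma SphereDiscCovering.exists_injOn {π : ℂ → OnePoint ℂ} {D : Set (OnePoint ℂ)}
    (hπ : SphereDiscCovering π D) {a : ℂ} (ha : a ∈ ball (0 : ℂ) 1) : ∃ N ∈ 𝓝 a, InjOn π N := by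
  obtain ⟨-, -, h, hc⟩ := hπ
  exact exists_injOn_nhds_of_isCoveringMap_restrict hc isOpen_ball ha

lemma SphereDiscCovering.nhds_le_map {π : ℂ → OnePoint ℂ} {D : Set (OnePoint ℂ)}
    (hπ : SphereDiscCovering π D) {a : ℂ} (ha : a ∈ ball (0 : ℂ) 1) :
    𝓝 (π a) ≤ map π (𝓝 a) := by
  obtain ⟨N, hN, hi⟩ := hπ.exists_injOn ha
  exact (hπ.1 a ha).nhds_le_map hN hi

/-- Lifting of holomorphic discs through a holomorphic disc covering. -/
lemma SphereDiscCovering.exists_lift {π : ℂ → OnePoint ℂ} {D : Set (OnePoint ℂ)}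
    (hπ : SphereDiscCovering π D) {φ : ℂ → OnePoint ℂ}
    (hφ : ∀ z ∈ ball (0 : ℂ) 1, SphereMeroAt φ z) (hφD : MapsTo φ (ball 0 1) D) {a : ℂ}
    (ha : a ∈ ball (0 : ℂ) 1) (hπa : π a = φ 0) :
    ∃ g : ℂ → ℂ, DifferentiableOn ℂ g (ball 0 1) ∧ MapsTo g (ball 0 1) (ball 0 1) ∧ g 0 = a ∧
      ∀ z ∈ ball 0 1, π (g z) = φ z := by
  obtain ⟨h, hc⟩ := hπ.2.2
  obtain ⟨g, hgc, hgm, hg0, hg⟩ := exists_lift_of_isCoveringMap_restrict hc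
    (fun z hz => (hφ z hz).1.continuousWithinAt) hφD ha hπa
  refine ⟨g, fun z hz => ?_, hgm, hg0, hg⟩
  obtain ⟨N, hN, hi⟩ := hπ.exists_injOn (hgm hz)
  refine (SphereMeroAt.analyticAt_of_comp (hπ.1 _ (hgm hz)) hN hi
    (hgc.continuousAt (isOpen_ball.mem_nhds hz)) ?_).differentiableAt.differentiableWithinAt
  have he : (fun x => π (g x)) =ᶠ[𝓝 z] φ := by
    filter_upwards [isOpen_ball.mem_nhds hz] with x hx using hg x hx
  exact ⟨(hφ z hz).1.congr he.symm, by
    refine (hφ z hz).2.congr ?_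
    filter_upwards [he] with x hx
    rw [hg z hz, hx]⟩

section Dynamics

variable {F : OnePoint ℂ → OnePoint ℂ} {V S : Set (OnePoint ℂ)}

lemma SphereSingularSet.compl_subset (F : OnePoint ℂ → OnePoint ℂ) (V S : Set (OnePoint ℂ)) :
    (SpherePostsingular F V S)ᶜ ⊆ Sᶜ := by
  refine compl_subset_compl.2 fun s hs => subset_closure (mem_iUnion.2 ⟨0, s, ⟨hs, ?_⟩, rfl⟩)
  intro k hk
  exact absurd hk (Nat.not_lt_zero k)

lemma SpherePostsingular.apply_mem (hhol : ∀ u ∈ V, SphereAnalyticAt F u) {u : OnePoint ℂ}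
    (hV : IsOpen V) (hu : u ∈ V) (huP : u ∈ SpherePostsingular F V S) :
    F u ∈ SpherePostsingular F V S := by
  refine mem_closure_iff_frequently.2 ?_
  refine (hhol u hu).1.tendsto.frequently ?_
  refine ((mem_closure_iff_frequently.1 huP).and_eventually (hV.mem_nhds hu)).mono ?_
  rintro x ⟨hx, hxV⟩
  obtain ⟨n, s, ⟨hsS, hs⟩, rfl⟩ := mem_iUnion.1 hx
  refine mem_iUnion.2 ⟨n + 1, s, ⟨hsS, fun k hk => ?_⟩, Function.iterate_succ_apply' F n s⟩
  rcases Nat.lt_succ_iff_lt_or_eq.1 hk with h | rfl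
  · exact hs k h
  · exact hxV

lemma SphereSingularSet.isOpen_domain (hhol : ∀ u ∈ V, SphereAnalyticAt F u) (hV : IsOpen V)
    (hS : SphereSingularSet F V S) : IsOpen (V ∩ F ⁻¹' Sᶜ) := by
  refine ContinuousOn.isOpen_inter_preimage (fun u hu => (hhol u hu).1.continuousWithinAt) hV ?_
  exact hS.1.isClosed.isOpen_compl

lemma SphereSingularSet.exists_injOn (hhol : ∀ u ∈ V, SphereAnalyticAt F u) (hV : IsOpen V)
    (hS : SphereSingularSet F V S) {u : OnePoint ℂ} (hu : u ∈ V) (hFu : F u ∈ Sᶜ) :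
    ∃ N ∈ 𝓝 u, InjOn F N := by
  obtain ⟨h, hc⟩ := hS.2.1
  exact exists_injOn_nhds_of_isCoveringMap_restrict hc (hS.isOpen_domain hhol hV) ⟨hu, hFu⟩

lemma SphereSingularSet.nhds_le_map (hS : SphereSingularSet F V S) {u : OnePoint ℂ} (hu : u ∈ V)
    (hFu : F u ∈ Sᶜ) : 𝓝 (F u) ≤ map F (𝓝 u) := by
  obtain ⟨h, hc⟩ := hS.2.1
  exact nhds_le_map_of_isCoveringMap_restrict hc hS.1.isClosed.isOpen_compl ⟨hu, hFu⟩

lemma isOpen_sphereFatou (F : OnePoint ℂ → OnePoint ℂ) (V : Set (OnePoint ℂ)) :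
    IsOpen (SphereFatou F V) := by
  refine isOpen_iff_mem_nhds.2 fun u hu => ?_
  obtain ⟨N, hN, huN, h⟩ := hu
  exact mem_of_superset (hN.mem_nhds huN) fun v hv => ⟨N, hN, hv, h⟩

lemma SphereFatou.apply_mem (hhol : ∀ u ∈ V, SphereAnalyticAt F u) (hV : IsOpen V)
    (hS : SphereSingularSet F V S) {u : OnePoint ℂ} (hu : u ∈ V) (hFu : F u ∈ Sᶜ)
    (hfat : u ∈ SphereFatou F V) : F u ∈ SphereFatou F V := by
  obtain ⟨N, hN, huN, h⟩ := hfat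
  have hW := hS.isOpen_domain hhol hV
  have hopen : ∀ x ∈ V ∩ F ⁻¹' Sᶜ, ∀ O ∈ 𝓝 x, F '' O ∈ 𝓝 (F x) := fun x hx O hO =>
    hS.nhds_le_map hx.1 hx.2 (image_mem_map hO)
  refine ⟨F '' (N ∩ (V ∩ F ⁻¹' Sᶜ)), ?_, ⟨u, ⟨huN, hu, hFu⟩, rfl⟩, ?_⟩
  · refine isOpen_iff_mem_nhds.2 ?_
    rintro _ ⟨x, hx, rfl⟩
    exact hopen x hx.2 _ ((hN.inter hW).mem_nhds hx)
  have himg : ∀ k, F^[k] '' (F '' (N ∩ (V ∩ F ⁻¹' Sᶜ))) ⊆ F^[k + 1] '' N := by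
    rintro k _ ⟨_, ⟨x, hx, rfl⟩, rfl⟩
    exact ⟨x, hx.1, Function.iterate_succ_apply F k x⟩
  rcases h with ⟨hn, heq⟩ | ⟨n, hn, hcl⟩
  · refine Or.inl ⟨fun k => (himg k).trans (hn (k + 1)), ?_⟩
    rintro _ ⟨x, hx, rfl⟩ ε hε
    obtain ⟨δ, hδ, hδx⟩ := heq x hx.1 ε hε
    have hnb : F '' (N ∩ {y | chordalDist x y < δ}) ∈ 𝓝 (F x) :=
      hopen x hx.2 _ (inter_mem (hN.mem_nhds hx.1) (eventually_chordalDist_lt x hδ))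
    obtain ⟨δ', hδ', hsub⟩ := exists_chordalDist_lt_subset hnb
    refine ⟨δ', hδ', fun v _ hv k => ?_⟩
    obtain ⟨y, ⟨hyN, hy⟩, rfl⟩ := hsub v hv
    rw [← Function.iterate_succ_apply, ← Function.iterate_succ_apply]
    exact hδx y hyN hy (k + 1)
  · rcases n with _ | n
    · exact absurd (subset_closure hu) (hcl ⟨u, huN, rfl⟩)
    · exact Or.inr ⟨n, fun k hk => (himg k).trans (hn (k + 1) (by omega)), (himg n).trans hcl⟩

/-- Lifting of holomorphic discs in the complement of the postsingular set through iterates. -/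
lemma exists_lift_iterate (hhol : ∀ u ∈ V, SphereAnalyticAt F u) (hV : IsOpen V)
    (hS : SphereSingularSet F V S) (k : ℕ) (x : OnePoint ℂ) (hx : ∀ j < k, F^[j] x ∈ V)
    {φ : ℂ → OnePoint ℂ} (hφ : ∀ z ∈ ball (0 : ℂ) 1, SphereMeroAt φ z)
    (hφU : MapsTo φ (ball 0 1) (SpherePostsingular F V S)ᶜ) (hφ0 : φ 0 = F^[k] x) :
    ∃ ψ : ℂ → OnePoint ℂ, (∀ z ∈ ball (0 : ℂ) 1, SphereMeroAt ψ z) ∧ ψ 0 = x ∧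
      ∀ z ∈ ball (0 : ℂ) 1, (∀ j < k, F^[j] (ψ z) ∈ V) ∧
        (∀ j ≤ k, F^[j] (ψ z) ∈ (SpherePostsingular F V S)ᶜ) ∧ F^[k] (ψ z) = φ z := by
  induction k generalizing x with
  | zero =>
    refine ⟨φ, hφ, hφ0, fun z hz => ⟨fun j hj => absurd hj (Nat.not_lt_zero j), fun j hj => ?_,
      rfl⟩⟩
    obtain rfl := Nat.le_zero.1 hj
    exact hφU hz
  | succ k ih =>
    have hxV : x ∈ V := hx 0 (Nat.succ_pos k)
    obtain ⟨ψ₁, hm, h0, hψ₁⟩ := ih (F x) (fun j hj => hx (j + 1) (by omega)) hφ0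
    have hS₁ : MapsTo ψ₁ (ball 0 1) Sᶜ := fun z hz =>
      SphereSingularSet.compl_subset F V S ((hψ₁ z hz).2.1 0 (Nat.zero_le k))
    have hb0 : (0 : ℂ) ∈ ball (0 : ℂ) 1 := mem_ball_self one_pos
    obtain ⟨h, hc⟩ := hS.2.1
    obtain ⟨ψ, hψc, hψm, hψ0, hψ⟩ := exists_lift_of_isCoveringMap_restrict hc
      (fun z hz => (hm z hz).1.continuousWithinAt) hS₁ (a := x)
      ⟨hxV, by show F x ∈ Sᶜ; rw [← h0]; exact hS₁ hb0⟩ h0.symm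
    refine ⟨ψ, fun z hz => ?_, hψ0, fun z hz => ⟨?_, ?_, ?_⟩⟩
    · obtain ⟨N, hN, hi⟩ := hS.exists_injOn hhol hV (hψm hz).1 (hψm hz).2
      refine (hhol _ (hψm hz).1).mero_of_comp hN hi (hψc.continuousAt (isOpen_ball.mem_nhds hz)) ?_
      have he : (fun x => F (ψ x)) =ᶠ[𝓝 z] ψ₁ := by
        filter_upwards [isOpen_ball.mem_nhds hz] with x hx using hψ x hx
      refine ⟨(hm z hz).1.congr he.symm, (hm z hz).2.congr ?_⟩
      filter_upwards [he] with x hx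
      rw [hψ z hz, hx]
    · rintro (_ | j) hj
      · exact (hψm hz).1
      · rw [Function.iterate_succ_apply, hψ z hz]
        exact (hψ₁ z hz).1 j (by omega)
    · rintro (_ | j) hj
      · intro hP
        refine (hψ₁ z hz).2.1 0 (Nat.zero_le k) ?_
        have := SpherePostsingular.apply_mem hhol hV (hψm hz).1 hP
        rwa [hψ z hz] at this
      · rw [Function.iterate_succ_apply, hψ z hz]
        exact (hψ₁ z hz).2.1 j (by omega)
    · rw [Function.iterate_succ_apply, hψ z hz]
      exact (hψ₁ z hz).2.2

lemma SphereFatou.iterate_mem (hhol : ∀ u ∈ V, SphereAnalyticAt F u) (hV : IsOpen V)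
    (hS : SphereSingularSet F V S) (k : ℕ) (x : OnePoint ℂ) (hx : ∀ j < k, F^[j] x ∈ V)
    (hxU : ∀ j ≤ k, F^[j] x ∈ (SpherePostsingular F V S)ᶜ) (hfat : x ∈ SphereFatou F V) :
    F^[k] x ∈ SphereFatou F V := by
  induction k with
  | zero => exact hfat
  | succ k ih =>
    rw [Function.iterate_succ_apply']
    refine SphereFatou.apply_mem hhol hV hS (hx k (Nat.lt_succ_self k)) ?_
      (ih (fun j hj => hx j (by omega)) fun j hj => hxU j (by omega))
    rw [← Function.iterate_succ_apply' F k x]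
    exact SphereSingularSet.compl_subset F V S (hxU (k + 1) le_rfl)

lemma SphereMeroAt.iterate_comp (hhol : ∀ u ∈ V, SphereAnalyticAt F u) {h : ℂ → OnePoint ℂ} {z : ℂ}
    (hh : SphereMeroAt h z) (k : ℕ) (hk : ∀ j < k, F^[j] (h z) ∈ V) :
    SphereMeroAt (fun x => F^[k] (h x)) z := by
  induction k with
  | zero => exact hh
  | succ k ih =>
    simp only [Function.iterate_succ_apply']
    exact (hhol _ (hk k (Nat.lt_succ_self k))).comp_mero (ψ := fun x => F^[k] (h x))
      (ih fun j hj => hk j (by omega))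

/-- Images of discs whose forward orbits avoid the postsingular set lie in the Fatou set. -/
lemma SphereFatou.mem_of_orbit (hhol : ∀ u ∈ V, SphereAnalyticAt F u)
    {P : Set (OnePoint ℂ)} (hthree : ∃ a b c : OnePoint ℂ, a ∈ P ∧ b ∈ P ∧ c ∈ P ∧ a ≠ b ∧ a ≠ c ∧
      b ≠ c) {h : ℂ → OnePoint ℂ} {O : Set ℂ} (hO : IsOpen O) (hh : ∀ z ∈ O, SphereMeroAt h z)
    (hopen : ∀ z ∈ O, 𝓝 (h z) ≤ map h (𝓝 z)) (hOV : ∀ z ∈ O, ∀ k, F^[k] (h z) ∈ V)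
    (hOP : ∀ z ∈ O, ∀ k, F^[k] (h z) ∉ P) {p : ℂ} (hp : p ∈ O) : h p ∈ SphereFatou F V := by
  refine ⟨h '' O, isOpen_iff_mem_nhds.2 ?_, ⟨p, hp, rfl⟩, Or.inl ⟨?_, ?_⟩⟩
  · rintro _ ⟨z, hz, rfl⟩
    exact hopen z hz (image_mem_map (hO.mem_nhds hz))
  · rintro k _ ⟨_, ⟨z, hz, rfl⟩, rfl⟩
    exact hOV z hz k
  rintro _ ⟨z, hz, rfl⟩ ε hε
  obtain ⟨a, b, c, ha, hb, hc, hab, hac, hbc⟩ := hthree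
  obtain ⟨K, hK, hKd⟩ := exists_chordalDist_le_crossRatio hab hac.symm hbc.symm
  obtain ⟨R, hR, hRO⟩ := Metric.isOpen_iff.1 hO z hz
  have hne : ∀ x ∈ ball z R, ∀ k, ∀ q ∈ P, F^[k] (h x) ≠ q := fun x hx k q hq he =>
    hOP x (hRO hx) k (he ▸ hq)
  have hest : ∀ k, ∀ y ∈ ball z (R / 2),
      chordalDist (F^[k] (h z)) (F^[k] (h y)) ≤ K * (13824 / R * ‖y - z‖) := by
    intro k y hy
    have hyR : y ∈ ball z R := ball_subset_ball (by linarith) hy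
    refine (hKd _ _ (hne z (mem_ball_self hR) k b hb) (hne y hyR k b hb)).trans ?_
    refine mul_le_mul_of_nonneg_left ?_ hK
    refine chordal_le_of_omits (g := fun x => crossRatio a b c (F^[k] (h x))) hR
      (fun x hx => ?_) (fun x hx => ?_) (fun x hx => ?_) hy
    · exact (((hh x (hRO hx)).iterate_comp hhol k fun j _ => hOV x (hRO hx) j).crossRatio_comp
        (hne x hx k b hb) hac.symm).differentiableAt.differentiableWithinAt
    · exact crossRatio_ne_zero (hne x hx k a ha) (hne x hx k b hb) hac.symm hbc.symm
    · exact crossRatio_ne_one (hne x hx k b hb) (hne x hx k c hc) hab hac.symm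
  have hcont : ContinuousAt (fun y : ℂ => K * (13824 / R * ‖y - z‖)) z := by fun_prop
  have hev : ∀ᶠ y in 𝓝 z, K * (13824 / R * ‖y - z‖) < ε :=
    hcont.eventually_lt continuousAt_const (by simpa using hε)
  obtain ⟨δ, hδ, hδs⟩ := exists_chordalDist_lt_subset (hopen z hz (image_mem_map
    (inter_mem (ball_mem_nhds z (half_pos hR)) hev)))
  refine ⟨δ, hδ, fun v _ hv k => ?_⟩
  obtain ⟨y, ⟨hyR, hy⟩, rfl⟩ := hδs v hv
  exact (hest k y hyR).trans_lt hy

end Dynamics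

/-- The involution of the disc exchanging `0` and `a`. -/
noncomputable def discInvolution (a z : ℂ) : ℂ := (a - z) / (1 - (starRingEnd ℂ) a * z)

lemma one_sub_conj_mul_ne_zero {a z : ℂ} (ha : ‖a‖ < 1) (hz : ‖z‖ < 1) :
    1 - (starRingEnd ℂ) a * z ≠ 0 := by
  intro h
  have h1 : ‖(starRingEnd ℂ) a * z‖ = 1 := by rw [← sub_eq_zero.1 h, norm_one]
  rw [norm_mul, RCLike.norm_conj] at h1
  nlinarith [norm_nonneg a, norm_nonneg z]

lemma norm_discInvolution_lt_one {a z : ℂ} (ha : ‖a‖ < 1) (hz : ‖z‖ < 1) :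
    ‖discInvolution a z‖ < 1 := by
  have h := norm_one_sub_conj_mul_sq a z
  have h0 := norm_pos_iff.2 (one_sub_conj_mul_ne_zero ha hz)
  rw [discInvolution, norm_div, div_lt_one h0, norm_sub_rev]
  refine lt_of_pow_lt_pow_left₀ 2 h0.le ?_
  have h1 : 0 < 1 - ‖a‖ ^ 2 := by nlinarith [norm_nonneg a]
  have h2 : 0 < 1 - ‖z‖ ^ 2 := by nlinarith [norm_nonneg z]
  nlinarith [mul_pos h1 h2]

lemma discInvolution_zero (a : ℂ) : discInvolution a 0 = a := by simp [discInvolution]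

lemma discInvolution_discInvolution {a z : ℂ} (ha : ‖a‖ < 1) (hz : ‖z‖ < 1) :
    discInvolution a (discInvolution a z) = z := by
  have h1 := one_sub_conj_mul_ne_zero ha hz
  have h2 := one_sub_conj_mul_ne_zero ha (norm_discInvolution_lt_one ha hz)
  have e : discInvolution a z * (1 - (starRingEnd ℂ) a * z) = a - z := div_mul_cancel₀ _ h1
  rw [discInvolution, div_eq_iff h2]
  linear_combination -e

lemma analyticAt_discInvolution {a z : ℂ} (ha : ‖a‖ < 1) (hz : ‖z‖ < 1) :
    AnalyticAt ℂ (discInvolution a) z :=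
  AnalyticAt.div (by fun_prop) (by fun_prop) (one_sub_conj_mul_ne_zero ha hz)

lemma norm_discInvolution_le_of_discDist_lt {a b : ℂ} (ha : ‖a‖ < 1) (hb : ‖b‖ < 1) {C : ℝ}
    (h : discDist a b < C) :
    ‖discInvolution a b‖ ≤ (Real.exp C - 1) / (Real.exp C + 1) := by
  have h1 := norm_discInvolution_lt_one ha hb
  change Real.log ((1 + ‖discInvolution a b‖) / (1 - ‖discInvolution a b‖)) < C at h
  set t := ‖discInvolution a b‖
  have ht : 0 ≤ t := norm_nonneg _
  rw [Real.log_lt_iff_lt_exp (div_pos (by linarith) (by linarith)),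
    div_lt_iff₀ (by linarith)] at h
  rw [le_div_iff₀ (by positivity)]
  linarith

lemma exists_covering_of_sphereHypDistToSet_lt {U E : Set (OnePoint ℂ)} {x : OnePoint ℂ} {C : ℝ}
    (hC : 0 < C) (h : sphereHypDistToSet U x E < ENNReal.ofReal C) :
    ∃ π : ℂ → OnePoint ℂ, SphereDiscCovering π (connectedComponentIn U x) ∧
      ∃ a b : ℂ, ‖a‖ < 1 ∧ ‖b‖ < 1 ∧ π a = x ∧ π b ∈ E ∧ discDist a b < C := by
  simp only [sphereHypDistToSet, sphereHypDist, iInf_lt_iff] at h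
  obtain ⟨e, he, π, hπ, a, ⟨ha, hax⟩, b, ⟨hb, hbe⟩, hd⟩ := h
  exact ⟨π, hπ, a, b, by simpa using ha, by simpa using hb, hax, hbe ▸ he,
    (ENNReal.ofReal_lt_ofReal_iff hC).1 hd⟩

/-- Points of the orbit at bounded hyperbolic distance from `E` are centers of holomorphic discs
which meet `E` in a fixed compact part. -/
lemma exists_disc_of_sphereHypDistToSet_lt {U E : Set (OnePoint ℂ)} {x : OnePoint ℂ} {C : ℝ}
    (hC : 0 < C) (h : sphereHypDistToSet U x E < ENNReal.ofReal C) :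
    ∃ φ : ℂ → OnePoint ℂ, (∀ z ∈ ball (0 : ℂ) 1, SphereMeroAt φ z) ∧ MapsTo φ (ball 0 1) U ∧
      φ 0 = x ∧ ∃ b : ℂ, ‖b‖ ≤ (Real.exp C - 1) / (Real.exp C + 1) ∧ φ b ∈ E := by
  obtain ⟨π, hπ, a, b, ha, hb, hax, hbE, hd⟩ := exists_covering_of_sphereHypDistToSet_lt hC h
  have hmaps : ∀ z ∈ ball (0 : ℂ) 1, discInvolution a z ∈ ball (0 : ℂ) 1 := fun z hz => by
    rw [mem_ball_zero_iff] at hz ⊢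
    exact norm_discInvolution_lt_one ha hz
  refine ⟨fun z => π (discInvolution a z), fun z hz => ?_, fun z hz => ?_, ?_,
    discInvolution a b, norm_discInvolution_le_of_discDist_lt ha hb hd, ?_⟩
  · exact (hπ.1 _ (hmaps z hz)).comp_analytic
      (analyticAt_discInvolution ha (mem_ball_zero_iff.1 hz))
  · exact connectedComponentIn_subset U x (hπ.2.1 ▸ mem_image_of_mem π (hmaps z hz))
  · simp only [discInvolution_zero, hax]
  · simp only [discInvolution_discInvolution ha hb, hbE]

/-- The orbit of a Fatou point cannot return to discs meeting the Julia set in a fixed compact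
part infinitely often. -/
lemma not_frequently_disc_meets_julia {F : OnePoint ℂ → OnePoint ℂ} {V S : Set (OnePoint ℂ)}
    (hV : IsOpen V) (hhol : ∀ u ∈ V, SphereAnalyticAt F u) (hS : SphereSingularSet F V S)
    (hthree : ∃ a b c : OnePoint ℂ, a ∈ SpherePostsingular F V S ∧
      b ∈ SpherePostsingular F V S ∧ c ∈ SpherePostsingular F V S ∧ a ≠ b ∧ a ≠ c ∧ b ≠ c)
    {w : OnePoint ℂ} (hw : w ∈ SphereFatou F V) (hwV : ∀ n, F^[n] w ∈ V)
    {π : ℂ → OnePoint ℂ}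
    (hπ : SphereDiscCovering π (connectedComponentIn (SpherePostsingular F V S)ᶜ w))
    {a : ℂ} (ha : a ∈ ball (0 : ℂ) 1) (hπa : π a = w) {r : ℝ} (hr : r < 1) :
    ¬∃ᶠ n in atTop, ∃ φ : ℂ → OnePoint ℂ, (∀ z ∈ ball (0 : ℂ) 1, SphereMeroAt φ z) ∧
      MapsTo φ (ball 0 1) (SpherePostsingular F V S)ᶜ ∧ φ 0 = F^[n] w ∧
      ∃ b : ℂ, ‖b‖ ≤ r ∧ φ b ∉ SphereFatou F V := by
  intro hfreq
  have hdisc : ∀ n : ℕ, ∃ (g : ℂ → ℂ) (b : ℂ), DifferentiableOn ℂ g (ball 0 1) ∧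
      MapsTo g (ball 0 1) (ball 0 1) ∧ g 0 = a ∧ ‖b‖ ≤ r ∧ π (g b) ∉ SphereFatou F V ∧
      ∀ z ∈ ball (0 : ℂ) 1, ∀ j < n, F^[j] (π (g z)) ∈ V ∧
        F^[j] (π (g z)) ∈ (SpherePostsingular F V S)ᶜ := by
    intro n
    obtain ⟨m, hnm, φ, hφ, hφU, hφ0, b, hb, hbJ⟩ := Filter.frequently_atTop.1 hfreq n
    obtain ⟨ψ, hψ, hψ0, hψF⟩ := exists_lift_iterate hhol hV hS m w (fun j _ => hwV j) hφ hφU hφ0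
    have h0 : (0 : ℂ) ∈ ball (0 : ℂ) 1 := mem_ball_self one_pos
    have hψD : MapsTo ψ (ball 0 1) (connectedComponentIn (SpherePostsingular F V S)ᶜ w) := by
      have hsub := IsPreconnected.subset_connectedComponentIn
        (((convex_ball (0 : ℂ) 1).isPreconnected.image ψ
          fun z hz => (hψ z hz).1.continuousWithinAt)) ⟨0, h0, hψ0⟩
        (F := (SpherePostsingular F V S)ᶜ) (by
          rintro _ ⟨z, hz, rfl⟩
          exact (hψF z hz).2.1 0 (Nat.zero_le m))
      exact fun z hz => hsub ⟨z, hz, rfl⟩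
    obtain ⟨g, hg, hgm, hg0, hgπ⟩ := hπ.exists_lift hψ hψD ha (by rw [hπa, hψ0])
    have hb1 : b ∈ ball (0 : ℂ) 1 := mem_ball_zero_iff.2 (hb.trans_lt hr)
    refine ⟨g, b, hg, hgm, hg0, hb, fun hfat => hbJ ?_, fun z hz j hj => ?_⟩
    · rw [hgπ b hb1] at hfat
      rw [← (hψF b hb1).2.2]
      exact SphereFatou.iterate_mem hhol hV hS m _ (hψF b hb1).1 (hψF b hb1).2.1 hfat
    · rw [hgπ z hz]
      exact ⟨(hψF z hz).1 j (by omega), (hψF z hz).2.1 j (by omega)⟩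
  choose g b hg hgm hg0 hb hbJ hgF using hdisc
  obtain ⟨p, hp, hlim, hball⟩ :=
    exists_ball_subset_image_of_selfMaps (hyperfilter ℕ) hg hgm hg0 hr hb
  have hpJ : π p ∉ SphereFatou F V := by
    refine (isOpen_sphereFatou F V).isClosed_compl.mem_of_tendsto
      ((hπ.1 p hp).1.tendsto.comp hlim) (Eventually.of_forall fun n => hbJ n)
  obtain ⟨ε, hε, hsub, hev⟩ := hball fun h => hpJ (by rw [h, hπa]; exact hw)
  have horb : ∀ z ∈ ball p ε, ∀ k, F^[k] (π z) ∈ V ∧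
      F^[k] (π z) ∈ (SpherePostsingular F V S)ᶜ := by
    intro z hz k
    have hgt : ∀ᶠ n in (hyperfilter ℕ : Filter ℕ), k < n :=
      (eventually_gt_atTop k).filter_mono Nat.hyperfilter_le_atTop
    obtain ⟨n, hn, hkn⟩ := (hev.and hgt).exists
    obtain ⟨y, hy, rfl⟩ := hn hz
    exact hgF n y hy k hkn
  exact hpJ (SphereFatou.mem_of_orbit hhol hthree isOpen_ball (fun z hz => hπ.1 z (hsub hz))
    (fun z hz => hπ.nhds_le_map (hsub hz)) (fun z hz k => (horb z hz k).1)
    (fun z hz k => (horb z hz k).2) (mem_ball_self hε))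

/-- **Theorem (Statement 18).** Let `f : V → Ĉ` be holomorphic and nonconstant, not the
restriction of a conformal automorphism of `Ĉ`, let `U = Ĉ∖P(f)` (hyperbolic since `P(f)` has
at least three points), and let `w ∈ F(f)` with the whole orbit of `w` defined and contained
in `U`. Then `d_U(fⁿ(w), U ∩ J(f)) → ∞`. -/
theorem orbit_far_from_julia
    (V : Set (OnePoint ℂ)) (hVopen : IsOpen V) (hVne : V.Nonempty)
    (F : OnePoint ℂ → OnePoint ℂ)
    (hhol : ∀ u ∈ V, SphereAnalyticAt F u)
    (hnoncst : ¬∃ c : OnePoint ℂ, ∀ u ∈ V, F u = c)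
    (hnotaut : ¬∃ g : OnePoint ℂ → OnePoint ℂ,
      (∀ u : OnePoint ℂ, SphereAnalyticAt g u) ∧ Function.Bijective g ∧ ∀ u ∈ V, g u = F u)
    (S : Set (OnePoint ℂ)) (hS : SphereSingularSet F V S)
    (U : Set (OnePoint ℂ)) (hU : U = (SpherePostsingular F V S)ᶜ)
    (hthree : ∃ a b c : OnePoint ℂ, a ∈ SpherePostsingular F V S ∧
      b ∈ SpherePostsingular F V S ∧ c ∈ SpherePostsingular F V S ∧ a ≠ b ∧ a ≠ c ∧ b ≠ c)
    (w : OnePoint ℂ) (hw : w ∈ SphereFatou F V)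
    (horbit : ∀ n : ℕ, F^[n] w ∈ V ∧ F^[n] w ∈ U) :
    Tendsto (fun n : ℕ => sphereHypDistToSet U (F^[n] w) (U ∩ (SphereFatou F V)ᶜ))
      atTop (𝓝 ⊤) := by
  subst hU
  rw [ENNReal.tendsto_nhds_top_iff_nnreal]
  intro x
  by_contra hnot
  have hC : (0 : ℝ) < x + 1 := by positivity
  have hfreq : ∃ᶠ n in atTop, sphereHypDistToSet (SpherePostsingular F V S)ᶜ (F^[n] w)
      ((SpherePostsingular F V S)ᶜ ∩ (SphereFatou F V)ᶜ) < ENNReal.ofReal (x + 1) := by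
    refine (Filter.not_eventually.1 hnot).mono fun n hn => (not_lt.1 hn).trans_lt ?_
    rw [ENNReal.ofReal_add (NNReal.coe_nonneg x) zero_le_one, ENNReal.ofReal_coe_nnreal, ENNReal.ofReal_one]
    exact ENNReal.lt_add_right ENNReal.coe_ne_top one_ne_zero
  obtain ⟨n₀, hn₀⟩ := hfreq.exists
  obtain ⟨π, hπ, a, -, ha, -, hπa, -, -⟩ := exists_covering_of_sphereHypDistToSet_lt hC hn₀
  have hshift : ∀ n, F^[n] (F^[n₀] w) = F^[n + n₀] w := fun n =>
    (Function.iterate_add_apply F n n₀ w).symm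
  refine not_frequently_disc_meets_julia hVopen hhol hS hthree
    (SphereFatou.iterate_mem hhol hVopen hS n₀ w (fun j _ => (horbit j).1)
      (fun j _ => (horbit j).2) hw)
    (fun n => by rw [hshift]; exact (horbit _).1) hπ (mem_ball_zero_iff.2 ha) hπa
    (r := (Real.exp (x + 1) - 1) / (Real.exp (x + 1) + 1)) ?_ ?_
  · rw [div_lt_one (by positivity)]
    linarith
  · refine Filter.frequently_atTop.2 fun N => ?_
    obtain ⟨m, hm, hmd⟩ := Filter.frequently_atTop.1 hfreq (N + n₀)
    obtain ⟨φ, hφ, hφU, hφ0, b, hb, hbJ⟩ := exists_disc_of_sphereHypDistToSet_lt hC hmd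
    refine ⟨m - n₀, by omega, φ, hφ, hφU, ?_, b, hb, hbJ.2⟩
    rw [hshift, Nat.sub_add_cancel (by omega), hφ0]
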